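/- arXiv:1303.6854 — 11 statements merged into one kernel-verified Lean document; each statement's English description precedes it below -/
import Mathlib

section
/- Fix ν > 0. Define a(t) = 1/(1 + 4ν²t) for t > −1/(4ν²) and b(r) = tan(νr)/ν for r ∈ (0, π/(2ν)). Then: (i) a is positive and satisfies the steady soliton ODE a′(t) = −4ν²·a(t)²; (ii) for every r ∈ (0, π/(2ν)) one has a(b(r)²/4)·b′(r) = 1; and (iii) lim_{r→0⁺} b(r) = 0 with lim_{r→0⁺} b′(r) = 1. -/
open Set Filter

/-! Everything follows from `b' r = 1 / cos² (ν r)`: since `1 + tan² = 1 / cos²`, the factor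
`a (b² / 4) = 1 / (1 + tan² (ν r))` equals `cos² (ν r)`, and both limits at `0` are values of
functions continuous there. -/

/-- Valid for every `r`: at the poles of `tan`, both sides are `0` by the junk-value conventions
of `deriv` and division. -/
lemma deriv_tan_mul_div (ν : ℝ) (hν : 0 < ν) (r : ℝ) :
    deriv (fun r => Real.tan (ν * r) / ν) r = 1 / Real.cos (ν * r) ^ 2 := by
  rw [deriv_div_const, deriv_comp_mul_left ν Real.tan r, Real.deriv_tan, smul_eq_mul]
  field_simp

/-- The exploding soliton `g₂(ν)`: with `a(t) = 1/(1 + 4ν²t)` and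
`b(r) = tan(νr)/ν` on `(0, π/(2ν))`, `a` is a positive solution of the steady
soliton ODE `a' = -4ν² a²` on `(-1/(4ν²), ∞)`, the warping function `b`
satisfies `a(b²/4)·b' = 1`, and `b(r) → 0`, `b'(r) → 1` as `r → 0⁺`. -/
theorem stmt_2 (ν : ℝ) (hν : 0 < ν)
    (a : ℝ → ℝ) (ha : a = fun t => 1 / (1 + 4 * ν ^ 2 * t))
    (b : ℝ → ℝ) (hb : b = fun r => Real.tan (ν * r) / ν) :
    (∀ t : ℝ, -(1 / (4 * ν ^ 2)) < t →
      0 < a t ∧ HasDerivAt a (-(4 * ν ^ 2) * (a t) ^ 2) t) ∧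
    (∀ r ∈ Set.Ioo 0 (Real.pi / (2 * ν)),
      a ((b r) ^ 2 / 4) * deriv b r = 1) ∧
    Tendsto b (nhdsWithin 0 (Set.Ioi 0)) (nhds 0) ∧
    Tendsto (deriv b) (nhdsWithin 0 (Set.Ioi 0)) (nhds 1) := by
  subst ha hb
  refine ⟨fun t ht => ?_, fun r hr => ?_, ?_, ?_⟩
  · have hpos : 0 < 1 + 4 * ν ^ 2 * t := by
      have h4 : 0 < 4 * ν ^ 2 := by positivity
      have h := mul_lt_mul_of_pos_left ht h4
      have h1 : 4 * ν ^ 2 * -(1 / (4 * ν ^ 2)) = -1 := by field_simp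
      linarith
    refine ⟨by positivity, ?_⟩
    have hd : HasDerivAt (fun t : ℝ => 1 + 4 * ν ^ 2 * t) (4 * ν ^ 2) t := by
      simpa using ((hasDerivAt_id t).const_mul (4 * ν ^ 2)).const_add 1
    simp only [one_div]
    refine (hd.fun_inv hpos.ne').congr_deriv ?_
    field_simp
  · have hlt : ν * r < Real.pi / 2 := by
      have h := mul_lt_mul_of_pos_left hr.2 hν
      have h1 : ν * (Real.pi / (2 * ν)) = Real.pi / 2 := by field_simp
      linarith
    have hcos : 0 < Real.cos (ν * r) :=
      Real.cos_pos_of_mem_Ioo ⟨by linarith [mul_pos hν hr.1, Real.pi_pos], hlt⟩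
    have ha : 1 + 4 * ν ^ 2 * ((Real.tan (ν * r) / ν) ^ 2 / 4)
        = 1 / Real.cos (ν * r) ^ 2 := by
      rw [Real.tan_eq_sin_div_cos]
      field_simp
      exact Real.cos_sq_add_sin_sq _
    rw [deriv_tan_mul_div ν hν]
    simp only [ha]
    field_simp
  · have hc : ContinuousAt (fun r => Real.tan (ν * r) / ν) 0 := by
      have h : ContinuousAt Real.tan (ν * 0) := Real.continuousAt_tan.2 (by simp)
      exact (ContinuousAt.comp (f := fun r : ℝ => ν * r) h (by fun_prop)).div_const ν
    simpa using hc.tendsto.mono_left nhdsWithin_le_nhds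
  · rw [funext (deriv_tan_mul_div ν hν)]
    have hc : ContinuousAt (fun r => 1 / Real.cos (ν * r) ^ 2) 0 :=
      ContinuousAt.div (by fun_prop) (by fun_prop) (by simp)
    simpa using hc.tendsto.mono_left nhdsWithin_le_nhds
end

section
/- Let μ > 0 and λ > 0, and set γ = 2μ/λ. Let a be a solution of the soliton ODE a′ = 2λa³ − 4μa² with 0 < a(t₀) < γ at some time t₀. Then a extends to a solution on [t₀, ∞), satisfies 0 < a(t) < γ there, is strictly decreasing on [t₀, ∞), and a(t) → 0 as t → ∞. -/
/-!
With `γ = 2μ/λ` the equation reads `a' = 2λ a² (a - γ)`, and it can be integrated explicitly.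
Substituting `a = γ / (1 + exp s)` turns it into `(s + exp s)' = 2λγ²`. The map `s ↦ s + exp s`
is an increasing bijection of `ℝ` with nonvanishing derivative, so its inverse `softInv` is a
differentiable increasing bijection, and `b t = γ / (1 + exp (softInv (2λγ² (t - t₀) + c)))` is a
solution on all of `ℝ`. The bounds `0 < b < γ`, the monotonicity and the limit can be read off
from this formula. The constant `c` is chosen such that `b t₀ = a t₀`, and then `a = b` on the
interval where `a` is given, by uniqueness (`soliton_unique`, a Grönwall argument for `a - b`).
-/

open Set Filter

lemma strictMono_add_exp : StrictMono (fun s : ℝ => s + Real.exp s) :=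
  fun _ _ h => add_lt_add h (Real.exp_lt_exp.2 h)

lemma surjective_add_exp : Function.Surjective (fun s : ℝ => s + Real.exp s) := by
  refine Continuous.surjective (by fun_prop) ?_ ?_
  · exact tendsto_atTop_mono (fun s => le_add_of_nonneg_right (Real.exp_pos s).le) tendsto_id
  · exact tendsto_id.atBot_add Real.tendsto_exp_atBot

/-- The inverse of `s ↦ s + exp s`, as an order isomorphism of `ℝ`. -/
noncomputable def softInv : ℝ ≃o ℝ :=
  (strictMono_add_exp.orderIsoOfSurjective _ surjective_add_exp).symm

lemma softInv_add_exp (s : ℝ) : softInv (s + Real.exp s) = s :=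
  (strictMono_add_exp.orderIsoOfSurjective _ surjective_add_exp).symm_apply_apply s

lemma add_exp_softInv (y : ℝ) : softInv y + Real.exp (softInv y) = y :=
  (strictMono_add_exp.orderIsoOfSurjective _ surjective_add_exp).apply_symm_apply y

lemma hasDerivAt_softInv (y : ℝ) :
    HasDerivAt softInv (1 + Real.exp (softInv y))⁻¹ y := by
  have hpos := Real.exp_pos (softInv y)
  exact HasDerivAt.of_local_left_inverse softInv.continuous.continuousAt
    ((hasDerivAt_id (softInv y)).add (Real.hasDerivAt_exp _)) (by positivity)
    (Eventually.of_forall add_exp_softInv)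

/-- Two solutions agreeing at `t₀` agree on `[t₀, T)`: on a compact subinterval their difference
`d` satisfies `d' = h d` with `h` continuous, hence bounded. -/
lemma soliton_unique {lam mu t₀ T : ℝ} {a b : ℝ → ℝ}
    (ha : ∀ t ∈ Ico t₀ T, HasDerivAt a (2 * lam * (a t) ^ 3 - 4 * mu * (a t) ^ 2) t)
    (hb : ∀ t ∈ Ico t₀ T, HasDerivAt b (2 * lam * (b t) ^ 3 - 4 * mu * (b t) ^ 2) t)
    (h : a t₀ = b t₀) : EqOn a b (Ico t₀ T) := by
  intro t₁ ht₁
  have hsub : Icc t₀ t₁ ⊆ Ico t₀ T := fun t ht => ⟨ht.1, ht.2.trans_lt ht₁.2⟩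
  have hac : ContinuousOn a (Icc t₀ t₁) := fun t ht =>
    (ha t (hsub ht)).continuousAt.continuousWithinAt
  have hbc : ContinuousOn b (Icc t₀ t₁) := fun t ht =>
    (hb t (hsub ht)).continuousAt.continuousWithinAt
  obtain ⟨K, hK⟩ := isCompact_Icc.exists_bound_of_continuousOn
    (f := fun t => 2 * lam * (a t ^ 2 + a t * b t + b t ^ 2) - 4 * mu * (a t + b t))
    (s := Icc t₀ t₁) (by fun_prop)
  have hzero := eq_zero_of_abs_deriv_le_mul_abs_self_of_eq_zero_right
    (f := fun t => a t - b t)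
    (f' := fun t => (2 * lam * (a t) ^ 3 - 4 * mu * (a t) ^ 2)
      - (2 * lam * (b t) ^ 3 - 4 * mu * (b t) ^ 2)) (K := K) (a := t₀) (b := t₁)
    (hac.sub hbc)
    (fun t ht => ((ha t (hsub (Ico_subset_Icc_self ht))).sub
      (hb t (hsub (Ico_subset_Icc_self ht)))).hasDerivWithinAt)
    (by simp [h])
    (fun t ht => by
      have hfac : (2 * lam * (a t) ^ 3 - 4 * mu * (a t) ^ 2)
          - (2 * lam * (b t) ^ 3 - 4 * mu * (b t) ^ 2)
          = (2 * lam * (a t ^ 2 + a t * b t + b t ^ 2) - 4 * mu * (a t + b t))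
            * (a t - b t) := by ring
      rw [hfac, norm_mul]
      exact mul_le_mul_of_nonneg_right (hK t (Ico_subset_Icc_self ht)) (norm_nonneg _))
  exact sub_eq_zero.1 (hzero t₁ (right_mem_Icc.2 ht₁.1))

/-- For `μ > 0`, `λ > 0` and `γ = 2μ/λ`, a solution of the soliton ODE
`a' = 2λa³ - 4μa²` with `0 < a(t₀) < γ` extends to a solution on `[t₀, ∞)`
which satisfies `0 < a < γ` there, is strictly decreasing, and tends to `0`
at infinity. -/
theorem stmt_4 (lam mu : ℝ) (hmu : 0 < mu) (hlam : 0 < lam) (γ : ℝ)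
    (hγ : γ = 2 * mu / lam) (t₀ T : ℝ) (hT : t₀ < T) (a : ℝ → ℝ)
    (hsol : ∀ t ∈ Set.Ico t₀ T,
      HasDerivAt a (2 * lam * (a t) ^ 3 - 4 * mu * (a t) ^ 2) t)
    (h0 : 0 < a t₀) (h1 : a t₀ < γ) :
    ∃ b : ℝ → ℝ, Set.EqOn a b (Set.Ico t₀ T) ∧
      (∀ t ∈ Set.Ici t₀,
        HasDerivAt b (2 * lam * (b t) ^ 3 - 4 * mu * (b t) ^ 2) t ∧
        0 < b t ∧ b t < γ) ∧
      StrictAntiOn b (Set.Ici t₀) ∧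
      Tendsto b atTop (nhds 0) := by
  have hγ0 : 0 < γ := h0.trans h1
  have hmu' : mu = lam * γ / 2 := by rw [hγ]; field_simp
  have hk : 0 < 2 * lam * γ ^ 2 := by positivity
  -- `s₀` solves `γ / (1 + exp s₀) = a t₀`.
  obtain ⟨s₀, hs₀⟩ : ∃ s₀, Real.exp s₀ = γ / a t₀ - 1 :=
    ⟨_, Real.exp_log (sub_pos.2 ((one_lt_div h0).2 h1))⟩
  let s : ℝ → ℝ := fun t => softInv (2 * lam * γ ^ 2 * (t - t₀) + (s₀ + Real.exp s₀))
  have hs_mono : StrictMono s := fun x y hxy => softInv.strictMono (by gcongr)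
  have hs_top : Tendsto s atTop atTop := by
    refine softInv.tendsto_atTop.comp (tendsto_atTop_add_const_right _ _ ?_)
    exact (tendsto_atTop_add_const_right _ (-t₀) tendsto_id).const_mul_atTop hk
  have hs_deriv : ∀ t, HasDerivAt s ((1 + Real.exp (s t))⁻¹ * (2 * lam * γ ^ 2)) t := by
    intro t
    have hlin : HasDerivAt (fun t => 2 * lam * γ ^ 2 * (t - t₀) + (s₀ + Real.exp s₀))
        (2 * lam * γ ^ 2) t := by
      simpa using (((hasDerivAt_id t).sub_const t₀).const_mul (2 * lam * γ ^ 2)).add_const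
        (s₀ + Real.exp s₀)
    exact (hasDerivAt_softInv _).comp t hlin
  have hb_deriv : ∀ t, HasDerivAt (fun t => γ / (1 + Real.exp (s t)))
      (2 * lam * (γ / (1 + Real.exp (s t))) ^ 3 - 4 * mu * (γ / (1 + Real.exp (s t))) ^ 2) t := by
    intro t
    have hpos := Real.exp_pos (s t)
    have hne : 1 + Real.exp (s t) ≠ 0 := by positivity
    refine ((hasDerivAt_const t γ).div ((hs_deriv t).exp.const_add 1) hne).congr_deriv ?_
    rw [hmu']
    field_simp
    ring
  refine ⟨fun t => γ / (1 + Real.exp (s t)), ?_, fun t _ => ⟨hb_deriv t, ?_, ?_⟩, ?_, ?_⟩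
  · refine soliton_unique hsol (fun t _ => hb_deriv t) ?_
    have : s t₀ = s₀ := by simp [s, softInv_add_exp]
    simp only [this, hs₀, add_sub_cancel, div_div_cancel₀ hγ0.ne']
  · positivity
  · exact div_lt_self hγ0 (by linarith [Real.exp_pos (s t)])
  · intro x _ y _ hxy
    have := Real.exp_lt_exp.2 (hs_mono hxy)
    have := Real.exp_pos (s x)
    exact div_lt_div_of_pos_left hγ0 (by positivity) (by linarith)
  · exact tendsto_const_nhds.div_atTop
      (tendsto_atTop_add_const_left _ _ (Real.tendsto_exp_atTop.comp hs_top))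
end

section
/- Let μ < 0 and λ < 0, and set γ = 2μ/λ > 0. Let a be a solution of the soliton ODE a′ = 2λa³ − 4μa² with a(t₀) > γ at some time t₀. Then a extends to a solution on [t₀, ∞), satisfies a(t) > γ there, is strictly decreasing on [t₀, ∞), and a(t) → γ as t → ∞. -/
open Set Filter

/-!
Write `c = -2λ > 0`; the equation is `a' = -c a² (a - γ)`. It is solved by separation of variables.
On `(γ, ∞)` the function `solitonTime c γ` is a primitive of `1 / (-c x² (x - γ))`, strictly
decreasing from `+∞` (at `γ`) to `0` (at infinity). Its inverse `β : (0, ∞) → (γ, ∞)` therefore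
solves the equation, decreases strictly and tends to `γ` at infinity
(`exists_inverse_solitonTime`). The extension of `a` is the translate of `β` with value `a t₀` at
`t₀`; it agrees with `a` by uniqueness for locally Lipschitz equations (`eqOn_of_solutions`).
-/

/-- A primitive of `x ↦ 1 / (-c x² (x - γ))` on `(γ, ∞)`, normalised to vanish at infinity: the time
at which a solution blowing up at time `0` has the value `x`. -/
noncomputable def solitonTime (c γ x : ℝ) : ℝ :=
  -(1 / (c * γ ^ 2)) * (Real.log (1 - γ / x) + γ / x)

lemma hasDerivAt_solitonTime {c γ x : ℝ} (hc : 0 < c) (hγ : 0 < γ) (hx : γ < x) :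
    HasDerivAt (solitonTime c γ) (-(c * x ^ 2 * (x - γ)))⁻¹ x := by
  have hx0 : 0 < x := hγ.trans hx
  have hy : 0 < 1 - γ / x := by
    rw [sub_pos, div_lt_one hx0]; exact hx
  have h1 : HasDerivAt (fun x : ℝ => γ / x) (-(γ / x ^ 2)) x := by
    have := (hasDerivAt_inv hx0.ne').const_mul γ
    simpa [div_eq_mul_inv] using this
  have h2 := (((h1.const_sub 1).log hy.ne').add h1).const_mul (-(1 / (c * γ ^ 2)))
  refine h2.congr_deriv ?_
  have hxg : x - γ ≠ 0 := (sub_pos.2 hx).ne'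
  have e : 1 - γ / x = (x - γ) / x := by field_simp
  rw [e]
  field_simp
  ring

lemma solitonTime_pos {c γ x : ℝ} (hc : 0 < c) (hγ : 0 < γ) (hx : γ < x) :
    0 < solitonTime c γ x := by
  have hx0 : 0 < x := hγ.trans hx
  have hq : 0 < γ / x := by positivity
  have hy : 0 < 1 - γ / x := by
    rw [sub_pos, div_lt_one hx0]; exact hx
  have h := Real.log_lt_sub_one_of_pos hy (by linarith)
  have hk : 0 < 1 / (c * γ ^ 2) := by positivity
  unfold solitonTime
  nlinarith

lemma strictAntiOn_solitonTime {c γ : ℝ} (hc : 0 < c) (hγ : 0 < γ) :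
    StrictAntiOn (solitonTime c γ) (Ioi γ) := by
  refine strictAntiOn_of_deriv_neg (convex_Ioi γ)
    (fun x hx => (hasDerivAt_solitonTime hc hγ hx).continuousAt.continuousWithinAt) ?_
  intro x hx
  rw [interior_Ioi] at hx
  rw [(hasDerivAt_solitonTime hc hγ hx).deriv, inv_lt_zero, neg_lt_zero]
  have h1 : 0 < x := hγ.trans hx
  have h2 : 0 < x - γ := sub_pos.2 hx
  positivity

lemma exists_solitonTime_eq {c γ s : ℝ} (hc : 0 < c) (hγ : 0 < γ) (hs : 0 < s) :
    ∃ x, γ < x ∧ solitonTime c γ x = s := by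
  have hk : -(1 / (c * γ ^ 2)) < 0 := by
    rw [neg_lt_zero]; positivity
  have hinf : Tendsto (solitonTime c γ) atTop (nhds 0) := by
    have h1 : Tendsto (fun x : ℝ => γ / x) atTop (nhds 0) := tendsto_const_nhds.div_atTop tendsto_id
    have h2 := ((h1.const_sub 1).log (by norm_num)).add h1
    have h3 := h2.const_mul (-(1 / (c * γ ^ 2)))
    rw [sub_zero, Real.log_one, add_zero, mul_zero] at h3
    exact h3
  have hnear : Tendsto (solitonTime c γ) (nhdsWithin γ (Ioi γ)) atTop := by
    have h1 : Tendsto (fun x : ℝ => γ / x) (nhdsWithin γ (Ioi γ)) (nhds 1) := by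
      have : ContinuousAt (fun x : ℝ => γ / x) γ := continuousAt_const.div continuousAt_id hγ.ne'
      have h := this.tendsto.mono_left (nhdsWithin_le_nhds (s := Ioi γ))
      simpa [div_self hγ.ne'] using h
    have h2 : Tendsto (fun x : ℝ => 1 - γ / x) (nhdsWithin γ (Ioi γ))
        (nhdsWithin 0 (Ioi 0)) := by
      refine tendsto_nhdsWithin_iff.2 ⟨by simpa using h1.const_sub 1, ?_⟩
      filter_upwards [self_mem_nhdsWithin] with x hx
      have hx' : γ < x := hx
      rw [mem_Ioi, sub_pos, div_lt_one (hγ.trans hx')]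
      exact hx'
    exact ((Real.tendsto_log_nhdsGT_zero.comp h2).atBot_add h1).const_mul_atBot_of_neg hk
  have himg := isPreconnected_Ioi.intermediate_value_Ioi (s := Ioi γ)
    (le_principal_iff.2 (Ioi_mem_atTop γ)) (le_principal_iff.2 self_mem_nhdsWithin)
    (fun x hx => (hasDerivAt_solitonTime hc hγ hx).continuousAt.continuousWithinAt) hinf hnear
  obtain ⟨x, hx, hxs⟩ := himg hs
  exact ⟨x, hx, hxs⟩

/-- The inverse of `solitonTime c γ` is the solution of `β' = -c β² (β - γ)` on `(0, ∞)` which blows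
up at time `0`; every solution above `γ` is a translate of it. -/
lemma exists_inverse_solitonTime {c γ : ℝ} (hc : 0 < c) (hγ : 0 < γ) :
    ∃ β : ℝ → ℝ, (∀ x, γ < x → β (solitonTime c γ x) = x) ∧
      (∀ s, 0 < s → γ < β s) ∧
      (∀ s, 0 < s → HasDerivAt β (-(c * β s ^ 2 * (β s - γ))) s) ∧
      StrictAntiOn β (Ioi 0) ∧ Tendsto β atTop (nhds γ) := by
  have hex : ∀ s : ℝ, ∃ x, 0 < s → γ < x ∧ solitonTime c γ x = s := by
    intro s
    by_cases hs : 0 < s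
    · obtain ⟨x, hx⟩ := exists_solitonTime_eq hc hγ hs
      exact ⟨x, fun _ => hx⟩
    · exact ⟨0, fun h => absurd h hs⟩
  choose β hβ using hex
  have hanti := strictAntiOn_solitonTime hc hγ
  have lt_of : ∀ s v, 0 < s → γ < v → solitonTime c γ v < s → β s < v := by
    intro s v hs hv h
    rw [← (hβ s hs).2] at h
    exact (hanti.lt_iff_gt hv (hβ s hs).1).1 h
  have gt_of : ∀ s u, 0 < s → γ < u → s < solitonTime c γ u → u < β s := by
    intro s u hs hu h
    rw [← (hβ s hs).2] at h
    exact (hanti.lt_iff_gt (hβ s hs).1 hu).1 h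
  have hcont : ∀ s, 0 < s → ContinuousAt β s := by
    intro s hs
    refine tendsto_order.2 ⟨fun u hu => ?_, fun v hv => ?_⟩
    -- `u` may lie at or below `γ`, where `solitonTime` is not the relevant primitive
    · rcases le_or_gt u γ with h | h
      · filter_upwards [Ioi_mem_nhds hs] with r hr
        exact h.trans_lt (hβ r hr).1
      · have : s < solitonTime c γ u := by
          conv_lhs => rw [← (hβ s hs).2]
          exact hanti h (hβ s hs).1 hu
        filter_upwards [Ioi_mem_nhds hs, Iio_mem_nhds this] with r hr hr'
        exact gt_of r u hr h hr'
    · have hv' : γ < v := (hβ s hs).1.trans hv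
      have : solitonTime c γ v < s := by
        conv_rhs => rw [← (hβ s hs).2]
        exact hanti (hβ s hs).1 hv' hv
      filter_upwards [Ioi_mem_nhds hs, Ioi_mem_nhds this] with r hr hr'
      exact lt_of r v hr hv' hr'
  refine ⟨β, ?_, fun s hs => (hβ s hs).1, ?_, ?_, ?_⟩
  · intro x hx
    have h := hβ _ (solitonTime_pos hc hγ hx)
    exact hanti.injOn h.1 hx h.2
  · intro s hs
    have hgt := (hβ s hs).1
    have hpos : 0 < c * β s ^ 2 * (β s - γ) := by
      have h1 : 0 < β s := hγ.trans hgt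
      have h2 : 0 < β s - γ := sub_pos.2 hgt
      positivity
    have h := HasDerivAt.of_local_left_inverse (hcont s hs) (hasDerivAt_solitonTime hc hγ hgt)
      (inv_ne_zero (neg_ne_zero.2 hpos.ne'))
      (by filter_upwards [Ioi_mem_nhds hs] with r hr using (hβ r hr).2)
    rwa [inv_inv] at h
  · intro s hs r hr hsr
    refine lt_of r (β s) hr (hβ s hs).1 ?_
    rwa [(hβ s hs).2]
  · refine tendsto_order.2 ⟨fun u hu => ?_, fun v hv => ?_⟩
    · filter_upwards [Ioi_mem_atTop 0] with r hr
      exact hu.trans (hβ r hr).1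
    · filter_upwards [Ioi_mem_atTop 0, Ioi_mem_atTop (solitonTime c γ v)] with r hr hr'
      exact lt_of r v hr hv hr'

/-- Forward uniqueness for an autonomous equation with a `C¹` right-hand side. -/
lemma eqOn_of_solutions {F : ℝ → ℝ} (hF : ContDiff ℝ 1 F) {t₀ T : ℝ} {a b : ℝ → ℝ}
    (ha : ∀ t ∈ Ico t₀ T, HasDerivAt a (F (a t)) t)
    (hb : ∀ t ∈ Ico t₀ T, HasDerivAt b (F (b t)) t) (h0 : a t₀ = b t₀) :
    EqOn a b (Ico t₀ T) := by
  intro t ht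
  have hsub : Icc t₀ t ⊆ Ico t₀ T := fun r hr => ⟨hr.1, hr.2.trans_lt ht.2⟩
  have hac : ContinuousOn a (Icc t₀ t) := fun r hr =>
    (ha r (hsub hr)).continuousAt.continuousWithinAt
  have hbc : ContinuousOn b (Icc t₀ t) := fun r hr =>
    (hb r (hsub hr)).continuousAt.continuousWithinAt
  -- both trajectories stay in a compact set up to time `t`, where `F` is Lipschitz
  have hK : IsCompact (a '' Icc t₀ t ∪ b '' Icc t₀ t) :=
    (isCompact_Icc.image_of_continuousOn hac).union (isCompact_Icc.image_of_continuousOn hbc)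
  obtain ⟨K, hLip⟩ := hF.locallyLipschitz.locallyLipschitzOn.exists_lipschitzOnWith_of_compact hK
  refine ODE_solution_unique_of_mem_Icc_right (v := fun _ => F)
    (s := fun _ => a '' Icc t₀ t ∪ b '' Icc t₀ t) (fun _ _ => hLip) hac
    (fun r hr => (ha r (hsub (Ico_subset_Icc_self hr))).hasDerivWithinAt)
    (fun r hr => Or.inl (mem_image_of_mem a (Ico_subset_Icc_self hr))) hbc
    (fun r hr => (hb r (hsub (Ico_subset_Icc_self hr))).hasDerivWithinAt)
    (fun r hr => Or.inr (mem_image_of_mem b (Ico_subset_Icc_self hr))) h0 ⟨ht.1, le_rfl⟩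

/-- For `μ < 0`, `λ < 0` and `γ = 2μ/λ > 0`, a solution of the soliton ODE
`a' = 2λa³ - 4μa²` with `a(t₀) > γ` extends to a solution on `[t₀, ∞)`
which satisfies `a > γ` there, is strictly decreasing, and tends to `γ`
at infinity. -/
theorem stmt_6 (lam mu : ℝ) (hmu : mu < 0) (hlam : lam < 0) (γ : ℝ)
    (hγ : γ = 2 * mu / lam) (t₀ T : ℝ) (hT : t₀ < T) (a : ℝ → ℝ)
    (hsol : ∀ t ∈ Set.Ico t₀ T,
      HasDerivAt a (2 * lam * (a t) ^ 3 - 4 * mu * (a t) ^ 2) t)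
    (h0 : γ < a t₀) :
    ∃ b : ℝ → ℝ, Set.EqOn a b (Set.Ico t₀ T) ∧
      (∀ t ∈ Set.Ici t₀,
        HasDerivAt b (2 * lam * (b t) ^ 3 - 4 * mu * (b t) ^ 2) t ∧
        γ < b t) ∧
      StrictAntiOn b (Set.Ici t₀) ∧
      Tendsto b atTop (nhds γ) := by
  have hγ0 : 0 < γ := by
    rw [hγ]; exact div_pos_of_neg_of_neg (by linarith) hlam
  have hc : 0 < -2 * lam := by linarith
  have hlg : lam * γ = 2 * mu := by
    rw [hγ]; field_simp [hlam.ne]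
  obtain ⟨β, hinv, hgt, hder, hanti, hlim⟩ := exists_inverse_solitonTime hc hγ0
  set d := solitonTime (-2 * lam) γ (a t₀) - t₀ with hd
  have hd0 : 0 < t₀ + d := by
    have := solitonTime_pos hc hγ0 h0
    linarith
  have hpos : ∀ t ∈ Ici t₀, 0 < t + d := fun t ht => by
    have : t₀ ≤ t := ht
    linarith
  have hb : ∀ t ∈ Ici t₀, HasDerivAt (fun t => β (t + d))
      (2 * lam * (β (t + d)) ^ 3 - 4 * mu * (β (t + d)) ^ 2) t := by
    intro t ht
    refine ((hder _ (hpos t ht)).comp_add_const t d).congr_deriv ?_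
    linear_combination (-2 * β (t + d) ^ 2) * hlg
  refine ⟨fun t => β (t + d), ?_, fun t ht => ⟨hb t ht, hgt _ (hpos t ht)⟩, ?_, ?_⟩
  · refine eqOn_of_solutions (F := fun x => 2 * lam * x ^ 3 - 4 * mu * x ^ 2) (by fun_prop) hsol
      (fun t ht => hb t ht.1) ?_
    have : t₀ + d = solitonTime (-2 * lam) γ (a t₀) := by rw [hd]; ring
    change a t₀ = β (t₀ + d)
    rw [this, hinv _ h0]
  · intro s hs r hr hsr
    exact hanti (hpos s hs) (hpos r hr) (by linarith)
  · exact hlim.comp (tendsto_atTop_add_const_right _ d tendsto_id)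
end

section
/- Let λ < 0 and μ ∈ ℝ, and let a be a maximal positive solution of the soliton ODE a′ = 2λa³ − 4μa² on its maximal interval (T₀, T₁), with a(t₀) > max(0, 2μ/λ) for some t₀ ∈ (T₀, T₁). Then T₀ > −∞ and a(t) → ∞ as t → T₀⁺ (finite-time blow-up backward in time). -/
/-!
Write the equation as `a' = F(a)` with `F(x) = 2λx³ - 4μx² = 2x²(λx - 2μ)`, so that `F < 0` above
`max(0, 2μ/λ)`. Every level above this threshold can only be crossed downwards, hence `a` is at
least `a t₀`, and nonincreasing, to the left of `t₀` (`le_of_soliton_backward`).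

*Finiteness of `T₀`.* The function `u = 1/a²` satisfies `u' = -4λ + 8μ/a`, which is bounded below
by some `δ > 0` as long as `a ≥ a t₀`. Since `u > 0`, the solution cannot have existed for longer
than `u(t₀)/δ` before `t₀` (`length_le_of_soliton`).

*Blow-up.* If the monotone function `a` were bounded near `T₀`, it would have a finite positive
limit `L` there. Gluing `a` to a Picard–Lindelöf solution through `(T₀, L)` gives a positive
solution on a strictly larger interval (`exists_soliton_extension`), contradicting maximality.
-/

open Set Filter

open Topology

/-- The right-hand side of the soliton ODE is negative above `max(0, 2μ/λ)`. -/
lemma soliton_field_neg {lam mu x : ℝ} (hlam : lam < 0) (hx : max 0 (2 * mu / lam) < x) :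
    2 * lam * x ^ 3 - 4 * mu * x ^ 2 < 0 := by
  obtain ⟨h0, h1⟩ := max_lt_iff.1 hx
  rw [div_lt_iff_of_neg hlam] at h1
  have : 0 < x ^ 2 * (2 * mu - x * lam) := mul_pos (by positivity) (by linarith)
  nlinarith

/-- A solution lying above the threshold at time `r` was at least as large at earlier times. -/
lemma le_of_soliton_backward {lam mu : ℝ} (hlam : lam < 0) {a : ℝ → ℝ} {s r : ℝ} (hsr : s ≤ r)
    (hd : ∀ t ∈ Icc s r, HasDerivAt a (2 * lam * (a t) ^ 3 - 4 * mu * (a t) ^ 2) t)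
    (har : max 0 (2 * mu / lam) < a r) : a r ≤ a s := by
  by_contra! h
  -- A level strictly between `a s` and `a r`, above the threshold, is an upper barrier on `[s, r]`.
  obtain ⟨c, hc, hcr⟩ := exists_between (max_lt har h)
  obtain ⟨hc1, hc2⟩ := max_lt_iff.1 hc
  have key := image_le_of_deriv_right_lt_deriv_boundary (f := a) (B := fun _ => c)
    (B' := fun _ => 0) (fun t ht => (hd t ht).continuousAt.continuousWithinAt)
    (fun t ht => (hd t (Ico_subset_Icc_self ht)).hasDerivWithinAt) hc2.le
    (fun t => hasDerivAt_const t c)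
    (fun t _ hx => by
      have hx' : a t = c := hx
      rw [hx']
      exact soliton_field_neg hlam hc1) (right_mem_Icc.2 hsr)
  exact absurd key (not_le.2 hcr)

/-- Uniform positivity of the derivative `-4λ + 8μ/x` of `1/a²` at the value `a = x`, for `x` at
least a fixed level `c` above the threshold. -/
lemma exists_rate_pos {lam mu c : ℝ} (hlam : lam < 0) (hc : max 0 (2 * mu / lam) < c) :
    ∃ δ > 0, ∀ x, c ≤ x → δ ≤ -4 * lam + 8 * mu / x := by
  obtain ⟨h0, h1⟩ := max_lt_iff.1 hc
  rw [div_lt_iff_of_neg hlam] at h1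
  rcases le_or_gt 0 mu with hmu | hmu
  · refine ⟨-4 * lam, by linarith, fun x hx => ?_⟩
    have hx0 : 0 < x := h0.trans_le hx
    have : 0 ≤ 8 * mu / x := by positivity
    linarith
  · refine ⟨-4 * lam + 8 * mu / c, ?_, fun x hx => ?_⟩
    · have : -4 * lam + 8 * mu / c = 4 * (2 * mu - c * lam) / c := by field_simp; ring
      rw [this]
      exact div_pos (by linarith) h0
    · have hx0 : 0 < x := h0.trans_le hx
      have : 8 * mu / c ≤ 8 * mu / x := by
        rw [div_le_div_iff₀ h0 hx0]
        nlinarith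
      linarith

/-- Backward lifespan bound for a solution lying above the threshold at time `r`. The bound
depends only on `lam`, `mu` and the final value `c`. -/
lemma length_le_of_soliton {lam mu c : ℝ} (hlam : lam < 0) (hc : max 0 (2 * mu / lam) < c) :
    ∃ l : ℝ, ∀ (a : ℝ → ℝ) (s r : ℝ), s ≤ r → a r = c →
      (∀ t ∈ Icc s r, HasDerivAt a (2 * lam * (a t) ^ 3 - 4 * mu * (a t) ^ 2) t) →
      r - s ≤ l := by
  obtain ⟨δ, hδ, hrate⟩ := exists_rate_pos hlam hc
  have hc0 : 0 < c := (max_lt_iff.1 hc).1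
  refine ⟨(c ^ 2)⁻¹ / δ, fun a s r hsr har hd => ?_⟩
  have hge : ∀ t ∈ Icc s r, c ≤ a t := fun t ht => har ▸ le_of_soliton_backward hlam ht.2
    (fun x hx => hd x ⟨ht.1.trans hx.1, hx.2⟩) (har ▸ hc)
  have hu : ∀ t ∈ Icc s r,
      HasDerivAt (fun t => ((a t) ^ 2)⁻¹) (-4 * lam + 8 * mu / a t) t := by
    intro t ht
    have h0 : a t ≠ 0 := (hc0.trans_le (hge t ht)).ne'
    refine (((hd t ht).fun_pow 2).fun_inv (pow_ne_zero 2 h0)).congr_deriv ?_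
    field_simp
    norm_num
    ring
  have hmv := (convex_Icc s r).mul_sub_le_image_sub_of_le_deriv (C := δ)
    (fun t ht => (hu t ht).continuousAt.continuousWithinAt)
    (fun t ht => (hu t (interior_subset ht)).differentiableAt.differentiableWithinAt)
    (fun t ht => by
      rw [(hu t (interior_subset ht)).deriv]
      exact hrate _ (hge t (interior_subset ht)))
    s (left_mem_Icc.2 hsr) r (right_mem_Icc.2 hsr) hsr
  have hs : 0 ≤ ((a s) ^ 2)⁻¹ := by positivity
  rw [le_div_iff₀ hδ]
  simp only [har] at hmv
  linarith

/-- A positive solution on `(S, T₁)` with a positive limit at the finite left endpoint `S` extends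
to a positive solution on `(S - ε, T₁)` for some `ε > 0`. -/
lemma exists_soliton_extension {lam mu S L : ℝ} {T₁ : EReal} (hST : (S : EReal) < T₁) (hL : 0 < L)
    {a : ℝ → ℝ}
    (hsol : ∀ t : ℝ, S < t → (t : EReal) < T₁ →
      0 < a t ∧ HasDerivAt a (2 * lam * (a t) ^ 3 - 4 * mu * (a t) ^ 2) t)
    (hlim : Tendsto a (𝓝[>] S) (𝓝 L)) :
    ∃ ε > 0, ∃ b : ℝ → ℝ, (∀ t : ℝ, S - ε < t → (t : EReal) < T₁ →
      0 < b t ∧ HasDerivAt b (2 * lam * (b t) ^ 3 - 4 * mu * (b t) ^ 2) t) ∧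
      ∀ t, S < t → b t = a t := by
  have hF : ContDiff ℝ 1 (fun x : ℝ => 2 * lam * x ^ 3 - 4 * mu * x ^ 2) := by fun_prop
  obtain ⟨f, hfS, ε₁, hε₁, hf⟩ :=
    hF.contDiffAt (x := L)
      |>.exists_forall_mem_closedBall_exists_eq_forall_mem_Ioo_hasDerivAt₀ S
  have hfd : HasDerivAt f (2 * lam * L ^ 3 - 4 * mu * L ^ 2) S := by
    simpa [hfS] using hf S ⟨by linarith, by linarith⟩
  have hfpos : ∀ᶠ t in 𝓝 S, 0 < f t :=
    hfd.continuousAt.eventually_const_lt (by rwa [hfS])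
  obtain ⟨ε₂, hε₂, hball⟩ := Metric.eventually_nhds_iff.1 hfpos
  -- The glued function: the local solution up to and including `S`, and `a` afterwards.
  let b : ℝ → ℝ := fun t => if t ≤ S then f t else a t
  have hbl : ∀ t, t ≤ S → b t = f t := fun t ht => if_pos ht
  have hbr : ∀ t, S < t → b t = a t := fun t ht => if_neg (not_le.2 ht)
  have hbS : b S = L := (hbl S le_rfl).trans hfS
  have hb_gt : ∀ t : ℝ, S < t → (t : EReal) < T₁ →
      HasDerivAt b (2 * lam * (b t) ^ 3 - 4 * mu * (b t) ^ 2) t := by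
    intro t ht htT
    rw [hbr t ht]
    refine (hsol t ht htT).2.congr_of_eventuallyEq ?_
    filter_upwards [Ioi_mem_nhds ht] with x hx using hbr x hx
  have hb_at : HasDerivAt b (2 * lam * (b S) ^ 3 - 4 * mu * (b S) ^ 2) S := by
    rw [hbS]
    have hleft : HasDerivWithinAt b (2 * lam * L ^ 3 - 4 * mu * L ^ 2) (Iic S) S :=
      hfd.hasDerivWithinAt.congr (fun x hx => hbl x hx) (hbl S le_rfl)
    have hblim : Tendsto b (𝓝[>] S) (𝓝 L) := by
      refine hlim.congr' ?_
      filter_upwards [self_mem_nhdsWithin] with x hx using (hbr x hx).symm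
    -- The right derivative at `S` is the limit of the derivatives from the right.
    have hright : HasDerivWithinAt b (2 * lam * L ^ 3 - 4 * mu * L ^ 2) (Ici S) S := by
      obtain ⟨R, hSR, hRT⟩ := EReal.exists_between_coe_real hST
      have hSR' : S < R := EReal.coe_lt_coe_iff.1 hSR
      have hbd : ∀ t ∈ Ioo S R, HasDerivAt b (2 * lam * (b t) ^ 3 - 4 * mu * (b t) ^ 2) t :=
        fun t ht => hb_gt t ht.1 ((EReal.coe_lt_coe_iff.2 ht.2).trans hRT)
      refine hasDerivWithinAt_Ici_of_tendsto_deriv (s := Ioo S R)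
        (fun t ht => (hbd t ht).differentiableAt.differentiableWithinAt) ?_
        (Ioo_mem_nhdsGT hSR') ?_
      · rw [ContinuousWithinAt, hbS]
        exact hblim.mono_left (nhdsWithin_mono S Ioo_subset_Ioi_self)
      · refine ((hF.continuous.tendsto L).comp hblim).congr' ?_
        filter_upwards [Ioo_mem_nhdsGT hSR'] with t ht using (hbd t ht).deriv.symm
    simpa [Iic_union_Ici] using hleft.union hright
  refine ⟨min ε₁ ε₂, lt_min hε₁ hε₂, b, fun t ht htT => ?_, hbr⟩
  have h1 : S - ε₁ < t := by linarith [min_le_left ε₁ ε₂]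
  have h2 : S - ε₂ < t := by linarith [min_le_right ε₁ ε₂]
  have hpos : t ≤ S → 0 < b t := by
    intro hle
    rw [hbl t hle]
    refine hball ?_
    rw [Real.dist_eq, abs_lt]
    constructor <;> linarith
  rcases lt_trichotomy t S with hlt | rfl | hgt
  · refine ⟨hpos hlt.le, ?_⟩
    rw [hbl t hlt.le]
    refine (hf t ⟨h1, by linarith⟩).congr_of_eventuallyEq ?_
    filter_upwards [Iio_mem_nhds hlt] with x hx using hbl x (le_of_lt hx)
  · exact ⟨hpos le_rfl, hb_at⟩
  · exact ⟨hbr t hgt ▸ (hsol t hgt htT).1, hb_gt t hgt htT⟩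

/-- For `λ < 0`, a maximal positive solution of the soliton ODE
`a' = 2λa³ - 4μa²` on its maximal interval `(T₀, T₁)` (endpoints in `EReal`)
with `a(t₀) > max(0, 2μ/λ)` at some `t₀` has `T₀ > -∞` and blows up as
`t → T₀⁺`. -/
theorem stmt_7 (lam mu : ℝ) (hlam : lam < 0) (T₀ T₁ : EReal) (hlt : T₀ < T₁)
    (a : ℝ → ℝ)
    (hsol : ∀ t : ℝ, T₀ < (t : EReal) → (t : EReal) < T₁ →
      0 < a t ∧ HasDerivAt a (2 * lam * (a t) ^ 3 - 4 * mu * (a t) ^ 2) t)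
    (hmax : ∀ T₀' T₁' : EReal, T₀' ≤ T₀ → T₁ ≤ T₁' →
      ∀ b : ℝ → ℝ,
        (∀ t : ℝ, T₀' < (t : EReal) → (t : EReal) < T₁' →
          0 < b t ∧ HasDerivAt b (2 * lam * (b t) ^ 3 - 4 * mu * (b t) ^ 2) t) →
        (∀ t : ℝ, T₀ < (t : EReal) → (t : EReal) < T₁ → b t = a t) →
        T₀' = T₀ ∧ T₁' = T₁)
    (t₀ : ℝ) (ht₀ : T₀ < (t₀ : EReal) ∧ (t₀ : EReal) < T₁)
    (ha : max 0 (2 * mu / lam) < a t₀) :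
    ∃ S₀ : ℝ, (S₀ : EReal) = T₀ ∧
      Tendsto a (nhdsWithin S₀ (Set.Ioi S₀)) atTop := by
  have hd : ∀ s t : ℝ, T₀ < (s : EReal) → s ≤ t → t ≤ t₀ →
      HasDerivAt a (2 * lam * (a t) ^ 3 - 4 * mu * (a t) ^ 2) t := fun s t hs hst ht =>
    (hsol t (hs.trans_le (EReal.coe_le_coe_iff.2 hst))
      ((EReal.coe_le_coe_iff.2 ht).trans_lt ht₀.2)).2
  have hge : ∀ s : ℝ, T₀ < (s : EReal) → s ≤ t₀ → a t₀ ≤ a s := fun s hs hst =>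
    le_of_soliton_backward hlam hst (fun t ht => hd s t hs ht.1 ht.2) ha
  obtain ⟨l, hl⟩ := length_le_of_soliton hlam ha
  have hbot : T₀ ≠ ⊥ := by
    rintro rfl
    have hl0 : 0 ≤ l := by
      simpa using hl a t₀ t₀ le_rfl rfl fun t ht => hd t₀ t ht₀.1 ht.1 ht.2
    have := hl a (t₀ - (l + 1)) t₀ (by linarith) rfl
      fun t ht => hd _ t (EReal.bot_lt_coe _) ht.1 ht.2
    linarith
  lift T₀ to ℝ using ⟨ne_top_of_lt hlt, hbot⟩ with S
  refine ⟨S, rfl, ?_⟩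
  have hSt : S < t₀ := EReal.coe_lt_coe_iff.1 ht₀.1
  have hanti : AntitoneOn a (Ioo S t₀) := by
    intro s hs t ht hst
    have hS : (S : EReal) < s := EReal.coe_lt_coe_iff.2 hs.1
    have hSt' : (S : EReal) < t := EReal.coe_lt_coe_iff.2 ht.1
    exact le_of_soliton_backward hlam hst (fun x hx => hd s x hS hx.1 (hx.2.trans ht.2.le))
      (ha.trans_le (hge t hSt' ht.2.le))
  by_cases hbdd : BddAbove (a '' Ioo S t₀)
  · exfalso
    have hlim := hanti.tendsto_nhdsWithin_Ioo_right (nonempty_Ioo.2 hSt) hbdd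
    obtain ⟨r, hr⟩ := nonempty_Ioo.2 hSt
    have hL : 0 < sSup (a '' Ioo S t₀) :=
      (hsol r (EReal.coe_lt_coe_iff.2 hr.1)
        ((EReal.coe_lt_coe_iff.2 hr.2).trans ht₀.2)).1.trans_le
        (le_csSup hbdd (mem_image_of_mem a hr))
    obtain ⟨ε, hε, b, hb, hba⟩ := exists_soliton_extension hlt hL
      (fun t ht htT => hsol t (EReal.coe_lt_coe_iff.2 ht) htT) hlim
    have h := (hmax ((S - ε : ℝ) : EReal) T₁ (EReal.coe_le_coe_iff.2 (by linarith)) le_rfl b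
      (fun t ht htT => hb t (EReal.coe_lt_coe_iff.1 ht) htT)
      (fun t ht _ => hba t (EReal.coe_lt_coe_iff.1 ht))).1
    have := EReal.coe_eq_coe_iff.1 h
    linarith
  · refine tendsto_atTop.2 fun M => ?_
    obtain ⟨_, ⟨r, hr, rfl⟩, hM⟩ := not_bddAbove_iff.1 hbdd M
    filter_upwards [Ioo_mem_nhdsGT hr.1] with t ht
    exact hM.le.trans (hanti ⟨ht.1, ht.2.trans hr.2⟩ hr ht.2.le)
end

section
/- Let μ ≠ 0 and λ > 0 with γ := 2μ/λ < 1 (and γ ≠ 0). Let a be the maximal positive solution of the soliton ODE a′ = 2λa³ − 4μa² with a(0) = 1. Then a is strictly increasing, its maximal interval of existence has finite right endpoint T₁ given explicitly by 4μ·T₁ = −1 − (1/γ)·log(1 − γ), T₁ > 0, and a(t) → ∞ as t → T₁⁻. -/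
open Set Filter

/-!
Write `μ = λγ/2`, so that the ODE reads `a' = 2λ a² (a - γ)`. Separation of variables gives the
primitive `H(x) = (log (1 - γ/x) + γ/x) / (2λγ²)` of `1 / (2λ x² (x - γ))` on `x > max γ 0`; it is
strictly increasing, negative (because `log y < y - 1` for `y ≠ 1`) and tends to `0` at infinity.

* `gap_pos`: `a - γ` solves the linear equation `w' = (2λa²) w`, so it keeps the sign it has
  at `t = 0`. Hence `a' > 0` on the whole interval.
* With `S = -H(1) > 0`, the function `H(a(t)) - t` is constant, so `H(a(t)) = t - S`
  (`sepTime_comp`). As `H < 0`, every time of existence is `< S`.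
* The inverse of `H` solves the ODE (`hasDerivAt_of_sepTime_eq`) and is defined on `[-S, 0)`, so it
  extends `a` up to time `S`; by maximality the right endpoint is `S`.
* If `t > S + H(M)`, then `H(a(t)) > H(M)`, so `a(t) > M`; this is the blow-up at `S`.
-/

/-- The primitive of `1 / (2λ x² (x - γ))` that vanishes at infinity: minus the time a
solution of `a' = 2λ a² (a - γ)` with value `x > max γ 0` needs to reach infinity. -/
noncomputable def sepTime (lam γ x : ℝ) : ℝ :=
  (Real.log (1 - γ / x) + γ / x) / (2 * lam * γ ^ 2)

lemma one_sub_div_pos {γ x : ℝ} (hx : 0 < x) (hxγ : γ < x) : 0 < 1 - γ / x := by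
  rw [sub_pos, div_lt_one hx]; exact hxγ

lemma sepTime_neg {lam γ x : ℝ} (hlam : 0 < lam) (hγ0 : γ ≠ 0) (hx : 0 < x) (hxγ : γ < x) :
    sepTime lam γ x < 0 := by
  have h1 := one_sub_div_pos hx hxγ
  have h2 : γ / x ≠ 0 := div_ne_zero hγ0 hx.ne'
  have h3 := Real.log_lt_sub_one_of_pos h1 (by intro h; apply h2; linarith)
  unfold sepTime
  apply div_neg_of_neg_of_pos
  · linarith
  · positivity

lemma hasStrictDerivAt_sepTime {lam γ x : ℝ} (hlam : 0 < lam) (hγ0 : γ ≠ 0) (hx : 0 < x)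
    (hxγ : γ < x) :
    HasStrictDerivAt (sepTime lam γ) (2 * lam * x ^ 2 * (x - γ))⁻¹ x := by
  have h1 := one_sub_div_pos hx hxγ
  have hd : HasStrictDerivAt (fun y : ℝ => γ / y) (γ * (-(x ^ 2)⁻¹)) x := by
    simpa only [div_eq_mul_inv] using (hasStrictDerivAt_inv hx.ne').const_mul γ
  have h := (((hd.const_sub 1).log h1.ne').add hd).div_const (2 * lam * γ ^ 2)
  refine h.congr_deriv ?_
  have h4 : x - γ ≠ 0 := (sub_pos.2 hxγ).ne'
  have h5 : 1 - γ / x = (x - γ) / x := by field_simp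
  rw [h5]
  field_simp
  ring

lemma sepTime_strictMonoOn {lam γ : ℝ} (hlam : 0 < lam) (hγ0 : γ ≠ 0) :
    StrictMonoOn (sepTime lam γ) (Ioi (max γ 0)) := by
  have hd : ∀ x ∈ Ioi (max γ 0),
      HasStrictDerivAt (sepTime lam γ) (2 * lam * x ^ 2 * (x - γ))⁻¹ x := fun x hx =>
    hasStrictDerivAt_sepTime hlam hγ0 (max_lt_iff.1 (mem_Ioi.1 hx)).2 (max_lt_iff.1 (mem_Ioi.1 hx)).1
  refine strictMonoOn_of_deriv_pos (convex_Ioi _)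
    (fun x hx => (hd x hx).hasDerivAt.continuousAt.continuousWithinAt) ?_
  intro x hx
  rw [interior_Ioi] at hx
  rw [(hd x hx).hasDerivAt.deriv]
  obtain ⟨h1, h2⟩ := max_lt_iff.1 (mem_Ioi.1 hx)
  have := sub_pos.2 h1
  positivity

lemma sepTime_tendsto (lam γ : ℝ) : Tendsto (sepTime lam γ) atTop (nhds 0) := by
  have h : Tendsto (fun x : ℝ => γ / x) atTop (nhds 0) := tendsto_id.const_div_atTop γ
  have h2 : Tendsto (fun x : ℝ => Real.log (1 - γ / x)) atTop (nhds 0) := by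
    have := (h.const_sub 1).log (by norm_num)
    simpa using this
  have := (h2.add h).div_const (2 * lam * γ ^ 2)
  rw [add_zero, zero_div] at this
  exact this

lemma exists_sepTime_eq {lam γ s : ℝ} (hlam : 0 < lam) (hγ1 : γ < 1) (hγ0 : γ ≠ 0)
    (hs1 : sepTime lam γ 1 ≤ s) (hs0 : s < 0) :
    ∃ x ∈ Ioi (max γ 0), sepTime lam γ x = s := by
  obtain ⟨N, hN, hN1⟩ := (((sepTime_tendsto lam γ).eventually (lt_mem_nhds hs0)).and
    (eventually_ge_atTop (1 : ℝ))).exists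
  have hc : ContinuousOn (sepTime lam γ) (Icc 1 N) := fun x hx =>
    (hasStrictDerivAt_sepTime hlam hγ0 (by linarith [hx.1])
      (by linarith [hx.1])).hasDerivAt.continuousAt.continuousWithinAt
  obtain ⟨x, hx, hxs⟩ := intermediate_value_Icc hN1 hc ⟨hs1, hN.le⟩
  exact ⟨x, mem_Ioi.2 (max_lt (hγ1.trans_le hx.1) (one_pos.trans_le hx.1)), hxs⟩

/-- Near `t`, a function `b` with `sepTime (b s) = s - S` agrees with the local inverse given by the
inverse function theorem, by injectivity of `sepTime`; so it is differentiable and solves the ODE.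
No continuity of `b` is assumed. -/
lemma hasDerivAt_of_sepTime_eq {lam γ S t : ℝ} (hlam : 0 < lam) (hγ0 : γ ≠ 0) {b : ℝ → ℝ}
    (hb : ∀ᶠ s in nhds t, b s ∈ Ioi (max γ 0) ∧ sepTime lam γ (b s) = s - S) :
    HasDerivAt b (2 * lam * (b t) ^ 2 * (b t - γ)) t := by
  obtain ⟨hbt, hbt'⟩ := hb.self_of_nhds
  obtain ⟨h1, h2⟩ := max_lt_iff.1 (mem_Ioi.1 hbt)
  have hd := hasStrictDerivAt_sepTime hlam hγ0 h2 h1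
  have hpos : 0 < 2 * lam * (b t) ^ 2 * (b t - γ) := by
    have := sub_pos.2 h1
    positivity
  have hne : (2 * lam * (b t) ^ 2 * (b t - γ))⁻¹ ≠ 0 := inv_ne_zero hpos.ne'
  have hl := (hd.to_localInverse hne).hasDerivAt
  have hr := hd.eventually_right_inverse hne
  have hlt : hd.localInverse _ _ _ hne (sepTime lam γ (b t)) = b t :=
    HasStrictFDerivAt.localInverse_apply_image _
  rw [hbt'] at hl hr hlt
  have hmem : ∀ᶠ y in nhds (t - S), hd.localInverse _ _ _ hne y ∈ Ioi (max γ 0) :=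
    hl.continuousAt.eventually (by rw [hlt]; exact isOpen_Ioi.mem_nhds hbt)
  have hsh : Tendsto (fun s : ℝ => s - S) (nhds t) (nhds (t - S)) :=
    (continuous_id.sub continuous_const).tendsto t
  have hcomp : HasDerivAt (fun s => hd.localInverse _ _ _ hne (s - S))
      (2 * lam * (b t) ^ 2 * (b t - γ)) t := by
    have := HasDerivAt.comp_sub_const t S hl
    rwa [inv_inv] at this
  refine hcomp.congr_of_eventuallyEq ?_
  filter_upwards [hb, hsh.eventually hr, hsh.eventually hmem] with s hs hs1 hs2
  exact (sepTime_strictMonoOn hlam hγ0).injOn hs.1 hs2 (hs.2.trans hs1.symm)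

lemma eq_of_hasDerivAt_zero {I : Set ℝ} (hI : Convex ℝ I) {f : ℝ → ℝ}
    (hf : ∀ t ∈ I, HasDerivAt f 0 t) {s t : ℝ} (hs : s ∈ I) (ht : t ∈ I) : f s = f t := by
  have := hI.norm_image_sub_le_of_norm_hasDerivWithin_le (C := 0)
    (fun x hx => (hf x hx).hasDerivWithinAt) (by simp) ht hs
  rw [zero_mul, norm_le_zero_iff, sub_eq_zero] at this
  exact this

/-- The integrating factor `exp (-∫₀ᵗ 2λa²)` makes `a - γ` constant, so `a` stays above the
separatrix `γ`, forwards and backwards in time. -/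
lemma gap_pos {lam γ : ℝ} {I : Set ℝ} (hIo : IsOpen I) (hI : Convex ℝ I) (h0I : (0 : ℝ) ∈ I)
    {a : ℝ → ℝ} (ha : ∀ t ∈ I, HasDerivAt a (2 * lam * (a t) ^ 2 * (a t - γ)) t)
    (h0 : γ < a 0) : ∀ t ∈ I, γ < a t := by
  intro t ht
  have hc : ContinuousOn (fun s => 2 * lam * (a s) ^ 2) I := fun s hs =>
    (((ha s hs).continuousAt.pow 2).const_mul (2 * lam)).continuousWithinAt
  have hA : ∀ s ∈ I, HasDerivAt (fun r => ∫ x in (0 : ℝ)..r, 2 * lam * (a x) ^ 2)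
      (2 * lam * (a s) ^ 2) s := by
    intro s hs
    refine intervalIntegral.integral_hasDerivAt_right ?_ ?_ (hc.continuousAt (hIo.mem_nhds hs))
    · exact (hc.mono (hI.ordConnected.uIcc_subset h0I hs)).intervalIntegrable
    · exact hc.stronglyMeasurableAtFilter hIo s hs
  have hw : ∀ s ∈ I, HasDerivAt
      (fun r => (a r - γ) * Real.exp (-∫ x in (0 : ℝ)..r, 2 * lam * (a x) ^ 2)) 0 s := by
    intro s hs
    refine (((ha s hs).sub_const γ).mul (hA s hs).neg.exp).congr_deriv ?_
    ring
  have h := eq_of_hasDerivAt_zero hI hw ht h0I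
  have hpos : 0 < (a t - γ) * Real.exp (-∫ x in (0 : ℝ)..t, 2 * lam * (a x) ^ 2) := by
    rw [h]
    exact mul_pos (sub_pos.2 h0) (Real.exp_pos _)
  exact sub_pos.1 (pos_of_mul_pos_left hpos (Real.exp_pos _).le)

lemma sepTime_comp {lam γ : ℝ} (hlam : 0 < lam) (hγ0 : γ ≠ 0) {I : Set ℝ} (hI : Convex ℝ I)
    (h0I : (0 : ℝ) ∈ I) {a : ℝ → ℝ}
    (ha : ∀ t ∈ I, HasDerivAt a (2 * lam * (a t) ^ 2 * (a t - γ)) t)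
    (hpos : ∀ t ∈ I, 0 < a t) (hgap : ∀ t ∈ I, γ < a t) (h0 : a 0 = 1) :
    ∀ t ∈ I, sepTime lam γ (a t) = t - -sepTime lam γ 1 := by
  intro t ht
  have hd : ∀ s ∈ I, HasDerivAt (fun r => sepTime lam γ (a r) - r) 0 s := by
    intro s hs
    have h1 := hpos s hs
    have h2 := sub_pos.2 (hgap s hs)
    refine (((hasStrictDerivAt_sepTime hlam hγ0 h1 (hgap s hs)).hasDerivAt.comp s
      (ha s hs)).sub (hasDerivAt_id s)).congr_deriv ?_
    rw [inv_mul_cancel₀ (by positivity), sub_self]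
  have := eq_of_hasDerivAt_zero hI hd ht h0I
  simp only [h0] at this
  linarith

/-- For `μ ≠ 0`, `λ > 0`, `γ = 2μ/λ < 1`, `γ ≠ 0`, the maximal positive
solution of the soliton ODE `a' = 2λa³ - 4μa²` with `a(0) = 1` (on its maximal
interval `(T₀, T₁)`, endpoints in `EReal`) is strictly increasing, the right
endpoint is finite and positive with `4μ·T₁ = -1 - (1/γ)·log(1-γ)`, and `a`
blows up as `t → T₁⁻`. -/
theorem stmt_8 (lam mu : ℝ) (hmu : mu ≠ 0) (hlam : 0 < lam) (γ : ℝ)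
    (hγ : γ = 2 * mu / lam) (hγ1 : γ < 1) (hγ0 : γ ≠ 0)
    (T₀ T₁ : EReal) (hlt : T₀ < T₁) (a : ℝ → ℝ)
    (hsol : ∀ t : ℝ, T₀ < (t : EReal) → (t : EReal) < T₁ →
      0 < a t ∧ HasDerivAt a (2 * lam * (a t) ^ 3 - 4 * mu * (a t) ^ 2) t)
    (hmax : ∀ T₀' T₁' : EReal, T₀' ≤ T₀ → T₁ ≤ T₁' →
      ∀ b : ℝ → ℝ,
        (∀ t : ℝ, T₀' < (t : EReal) → (t : EReal) < T₁' →
          0 < b t ∧ HasDerivAt b (2 * lam * (b t) ^ 3 - 4 * mu * (b t) ^ 2) t) →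
        (∀ t : ℝ, T₀ < (t : EReal) → (t : EReal) < T₁ → b t = a t) →
        T₀' = T₀ ∧ T₁' = T₁)
    (h0mem : T₀ < (0 : EReal) ∧ (0 : EReal) < T₁) (h0 : a 0 = 1) :
    StrictMonoOn a {t : ℝ | T₀ < (t : EReal) ∧ (t : EReal) < T₁} ∧
    ∃ S₁ : ℝ, (S₁ : EReal) = T₁ ∧ 0 < S₁ ∧
      4 * mu * S₁ = -1 - (1 / γ) * Real.log (1 - γ) ∧
      Tendsto a (nhdsWithin S₁ (Set.Iio S₁)) atTop := by
  have hmuγ : mu = lam * γ / 2 := by rw [hγ]; field_simp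
  have hrhs : ∀ x : ℝ, 2 * lam * x ^ 3 - 4 * mu * x ^ 2 = 2 * lam * x ^ 2 * (x - γ) := by
    intro x; rw [hmuγ]; ring
  simp only [hrhs] at hsol hmax
  have hopen : ∀ U V : EReal, IsOpen {t : ℝ | U < (t : EReal) ∧ (t : EReal) < V} := fun U V =>
    (isOpen_Ioo (a := U) (b := V)).preimage continuous_coe_real_ereal
  set I : Set ℝ := {t : ℝ | T₀ < (t : EReal) ∧ (t : EReal) < T₁} with hIdef
  have hIo : IsOpen I := hopen T₀ T₁
  have hI : Convex ℝ I := by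
    have : I.OrdConnected := ⟨fun x hx y hy z hz =>
      ⟨hx.1.trans_le (EReal.coe_le_coe_iff.2 hz.1),
        (EReal.coe_le_coe_iff.2 hz.2).trans_lt hy.2⟩⟩
    exact this.convex
  have h0I : (0 : ℝ) ∈ I := h0mem
  have ha : ∀ t ∈ I, HasDerivAt a (2 * lam * (a t) ^ 2 * (a t - γ)) t :=
    fun t ht => (hsol t ht.1 ht.2).2
  have hpos : ∀ t ∈ I, 0 < a t := fun t ht => (hsol t ht.1 ht.2).1
  have hgap : ∀ t ∈ I, γ < a t := gap_pos hIo hI h0I ha (by rw [h0]; exact hγ1)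
  have hmem : ∀ t ∈ I, a t ∈ Ioi (max γ 0) := fun t ht => max_lt (hgap t ht) (hpos t ht)
  have hH := sepTime_comp hlam hγ0 hI h0I ha hpos hgap h0
  have hmono := sepTime_strictMonoOn (γ := γ) hlam hγ0
  have hSpos : 0 < -sepTime lam γ 1 := neg_pos.2 (sepTime_neg hlam hγ0 one_pos hγ1)
  have hS1 : 4 * mu * -sepTime lam γ 1 = -1 - (1 / γ) * Real.log (1 - γ) := by
    rw [hmuγ, sepTime, div_one]
    field_simp
    ring
  set S := -sepTime lam γ 1 with hSdef
  have hS0 : T₀ < (S : EReal) := h0mem.1.trans (EReal.coe_pos.2 hSpos)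
  have hTS : T₁ ≤ (S : EReal) := by
    by_contra! hcon
    have hSI : S ∈ I := ⟨hS0, hcon⟩
    have h1 := hH S hSI
    have h2 := sepTime_neg hlam hγ0 (hpos S hSI) (hgap S hSI)
    linarith
  -- The extension of `a` up to time `S`: the inverse of `sepTime`, shifted in time by `S`.
  have hex : ∀ t : ℝ, ∃ x : ℝ, T₀ < (t : EReal) → (t : EReal) < (S : EReal) →
      x ∈ Ioi (max γ 0) ∧ sepTime lam γ x = t - S := by
    intro t
    by_cases h : T₀ < (t : EReal) ∧ (t : EReal) < (S : EReal)
    · rcases lt_or_ge (t : EReal) T₁ with h1 | h1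
      · exact ⟨a t, fun _ _ => ⟨hmem t ⟨h.1, h1⟩, hH t ⟨h.1, h1⟩⟩⟩
      · have ht0 : 0 < t := EReal.coe_pos.1 (h0mem.2.trans_le h1)
        have htS : t < S := EReal.coe_lt_coe_iff.1 h.2
        obtain ⟨x, hx, hx'⟩ := exists_sepTime_eq (s := t - S) hlam hγ1 hγ0
          (by linarith) (by linarith)
        exact ⟨x, fun _ _ => ⟨hx, hx'⟩⟩
    · exact ⟨0, fun h1 h2 => absurd ⟨h1, h2⟩ h⟩
  choose b hb using hex
  have hST : (S : EReal) = T₁ := by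
    refine (hmax T₀ S le_rfl hTS b ?_ ?_).2
    · intro t ht1 ht2
      refine ⟨(max_lt_iff.1 (mem_Ioi.1 (hb t ht1 ht2).1)).2, hasDerivAt_of_sepTime_eq (S := S) hlam hγ0 ?_⟩
      filter_upwards [(hopen T₀ S).mem_nhds ⟨ht1, ht2⟩] with s hs
      exact hb s hs.1 hs.2
    · intro t ht1 ht2
      have h := hb t ht1 (ht2.trans_le hTS)
      exact hmono.injOn h.1 (hmem t ⟨ht1, ht2⟩) (h.2.trans (hH t ⟨ht1, ht2⟩).symm)
  refine ⟨?_, S, hST, hSpos, hS1, ?_⟩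
  · refine strictMonoOn_of_deriv_pos hI
      (fun t ht => (ha t ht).continuousAt.continuousWithinAt) ?_
    intro t ht
    have ht' := interior_subset ht
    rw [(ha t ht').deriv]
    have h1 := hpos t ht'
    have h2 := sub_pos.2 (hgap t ht')
    positivity
  · rw [tendsto_atTop]
    intro M
    -- `sepTime` is only controlled above `max γ 0 < 1`, so compare with `max M 1`.
    have hN : max M 1 ∈ Ioi (max γ 0) :=
      (max_lt hγ1 one_pos).trans_le (le_max_right M 1)
    have hNneg := sepTime_neg hlam hγ0 (max_lt_iff.1 (mem_Ioi.1 hN)).2 (max_lt_iff.1 (mem_Ioi.1 hN)).1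
    have hlow : max 0 (S + sepTime lam γ (max M 1)) < S := max_lt hSpos (by linarith)
    filter_upwards [Ioo_mem_nhdsLT hlow] with t ht
    obtain ⟨ht0, htN⟩ := max_lt_iff.1 ht.1
    have htI : t ∈ I := ⟨h0mem.1.trans (EReal.coe_pos.2 ht0),
      hST ▸ EReal.coe_lt_coe_iff.2 ht.2⟩
    have h1 : sepTime lam γ (max M 1) < sepTime lam γ (a t) := by
      rw [hH t htI]; linarith
    exact (le_max_left M 1).trans ((hmono.lt_iff_lt hN (hmem t htI)).1 h1).le
end

section
/- Let λ > 0 and μ ≠ 0, and let a be a maximal positive solution of the soliton ODE a′ = 2λa³ − 4μa² with a(t₀) > max(0, 2μ/λ) for some t₀. Then the maximal interval of existence has a finite right endpoint T₁ < ∞, a(t) → ∞ as t → T₁⁻, and the refined asymptotic expansion holds: lim_{t→T₁⁻} ( a(t) − 1/√(4λ(T₁ − t)) ) = 2μ/(3λ). -/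
/-!
Above the larger of the two equilibria `0` and `2μ/λ` the right-hand side `2λa³ - 4μa²` is
positive, so a solution starting there never drops below its initial value `A`
(`soliton_ge_initial`) and is increasing. On `[A, ∞)` one has `2λa³ - 4μa² ≥ c a³` for some
`c > 0`, hence `a⁻²` decreases at rate at least `2c` while staying positive, which bounds the
lifespan (`soliton_time_bound`). At the finite right endpoint `S` the monotone function `a` either
tends to `∞` or has a finite positive limit; in the second case the solution could be continued
past `S` by Picard–Lindelöf (`soliton_extend`), contradicting maximality.

For the expansion (`soliton_asymptotics`), put `u = 1/a` and `w = √(4λ(S - t))`. Both tend to `0`,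
and `(u²)' = 8μu - 4λ`, `(w²)' = -4λ`, so l'Hôpital gives `u/w → 1`. Moreover
`(w² - u²)' = -8μu` and `(w³)' = -6λw`, so l'Hôpital gives `(w² - u²)/w³ → 4μ/(3λ)`. Finally
`1/u - 1/w = ((w² - u²)/w³) / ((u/w)(1 + u/w)) → 2μ/(3λ)`.
-/

open Set Filter
open Topology

/-- Initial data above both equilibria act as a lower barrier. -/
lemma soliton_ge_initial {lam mu : ℝ} (hlam : 0 < lam) {a : ℝ → ℝ} {s t : ℝ} (hst : s ≤ t)
    (hder : ∀ x ∈ Icc s t, HasDerivAt a (2 * lam * (a x) ^ 3 - 4 * mu * (a x) ^ 2) x)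
    (ha : max 0 (2 * mu / lam) < a s) : a s ≤ a t := by
  have h0 : 0 < a s := (le_max_left _ _).trans_lt ha
  have h1 : 2 * mu < a s * lam := (div_lt_iff₀ hlam).1 ((le_max_right _ _).trans_lt ha)
  refine image_le_of_deriv_right_lt_deriv_boundary' (f := fun _ => a s) (f' := fun _ => 0)
    (B := a) (B' := fun x => 2 * lam * (a x) ^ 3 - 4 * mu * (a x) ^ 2) continuousOn_const
    (fun x _ => hasDerivWithinAt_const _ _ _) le_rfl
    (fun x hx => (hder x hx).continuousAt.continuousWithinAt)
    (fun x hx => (hder x (Ico_subset_Icc_self hx)).hasDerivWithinAt) ?_ (right_mem_Icc.2 hst)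
  intro x _ hx
  rw [← hx]
  have : 0 < 2 * (a s) ^ 2 * (a s * lam - 2 * mu) := by
    have := sub_pos.2 h1
    positivity
  linarith

/-- The lifespan bound: `K` depends only on the parameters and on the initial value `A`. -/
lemma soliton_time_bound {lam mu A : ℝ} (hlam : 0 < lam) (hA : max 0 (2 * mu / lam) < A) :
    ∃ K : ℝ, ∀ (a : ℝ → ℝ) (s t : ℝ), s ≤ t → a s = A →
      (∀ x ∈ Icc s t, HasDerivAt a (2 * lam * (a x) ^ 3 - 4 * mu * (a x) ^ 2) x) →
      t - s < K := by
  have h0 : 0 < A := (le_max_left _ _).trans_lt hA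
  have h1 : 2 * mu < A * lam := (div_lt_iff₀ hlam).1 ((le_max_right _ _).trans_lt hA)
  obtain ⟨c, hc, hcA⟩ : ∃ c : ℝ, 0 < c ∧ ∀ y, A ≤ y → c * y ≤ 2 * lam * y - 4 * mu := by
    refine ⟨2 * lam - max 0 (4 * mu / A), ?_, ?_⟩
    · rw [sub_pos, max_lt_iff, div_lt_iff₀ h0]
      constructor <;> linarith
    · intro y hy
      have h2 : 4 * mu ≤ max 0 (4 * mu / A) * A := by
        calc 4 * mu = 4 * mu / A * A := by field_simp
          _ ≤ _ := by gcongr; exact le_max_right _ _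
      have h3 : max 0 (4 * mu / A) * A ≤ max 0 (4 * mu / A) * y := by gcongr
      linarith
  refine ⟨(A ^ 2)⁻¹ / (2 * c), fun a s t hst has hder => ?_⟩
  have hge : ∀ x ∈ Icc s t, A ≤ a x := fun x hx => by
    rw [← has]
    exact soliton_ge_initial hlam hx.1
      (fun y hy => hder y ⟨hy.1, hy.2.trans hx.2⟩) (by rw [has]; exact hA)
  have hd : ∀ x ∈ Icc s t, HasDerivAt (fun x => ((a x) ^ 2)⁻¹)
      (-2 * (2 * lam * a x - 4 * mu) / a x) x := fun x hx => by
    have hax : a x ≠ 0 := (h0.trans_le (hge x hx)).ne'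
    refine (((hder x hx).fun_pow 2).fun_inv (pow_ne_zero 2 hax)).congr_deriv ?_
    simp only [Nat.cast_ofNat, Nat.add_one_sub_one, pow_one]
    field_simp
  have key := (convex_Icc s t).image_sub_le_mul_sub_of_deriv_le (C := -2 * c)
    (fun x hx => (hd x hx).continuousAt.continuousWithinAt)
    (fun x hx => (hd x (interior_subset hx)).differentiableAt.differentiableWithinAt)
    (fun x hx => by
      have hx' := interior_subset hx
      have hax : 0 < a x := h0.trans_le (hge x hx')
      rw [(hd x hx').deriv, div_le_iff₀ hax]
      linarith [hcA _ (hge x hx')])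
    s (left_mem_Icc.2 hst) t (right_mem_Icc.2 hst) hst
  simp only [has] at key
  have hpos : 0 < ((a t) ^ 2)⁻¹ := by
    have := h0.trans_le (hge t (right_mem_Icc.2 hst))
    positivity
  rw [lt_div_iff₀ (by positivity)]
  linarith

/-- A solution with a finite positive left limit at `S` continues past `S`: it is glued to a local
solution through `(S, L)`, the two one-sided derivatives at `S` agreeing by the equation. -/
lemma soliton_extend {lam mu : ℝ} {a : ℝ → ℝ} {r S L : ℝ} (hr : r < S)
    (hder : ∀ x ∈ Ioo r S, HasDerivAt a (2 * lam * (a x) ^ 3 - 4 * mu * (a x) ^ 2) x)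
    (hL : 0 < L) (hlim : Tendsto a (𝓝[<] S) (𝓝 L)) :
    ∃ (S' : ℝ) (b : ℝ → ℝ), S < S' ∧ (∀ t < S, b t = a t) ∧
      ∀ t, S ≤ t → t < S' →
        0 < b t ∧ HasDerivAt b (2 * lam * (b t) ^ 3 - 4 * mu * (b t) ^ 2) t := by
  have hcd : ContDiffAt ℝ 1 (fun y : ℝ => 2 * lam * y ^ 3 - 4 * mu * y ^ 2) L := by fun_prop
  obtain ⟨β, hβ0, ε, hε, hβ⟩ :=
    hcd.exists_forall_mem_closedBall_exists_eq_forall_mem_Ioo_hasDerivAt₀ S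
  have hβS := hβ S ⟨by linarith, by linarith⟩
  have hpos : ∀ᶠ t in 𝓝 S, 0 < β t :=
    hβS.continuousAt.eventually (lt_mem_nhds (by rw [hβ0]; exact hL))
  obtain ⟨δ, hδ, hδpos⟩ := Metric.eventually_nhds_iff.1 hpos
  let b : ℝ → ℝ := fun t => if t < S then a t else β t
  have hb_lt : ∀ t < S, b t = a t := fun t ht => if_pos ht
  have hb_ge : ∀ t, S ≤ t → b t = β t := fun t ht => if_neg ht.not_gt
  have hbS : b S = L := (hb_ge S le_rfl).trans hβ0
  have hbder : ∀ x ∈ Ioo r S, HasDerivAt b (2 * lam * (a x) ^ 3 - 4 * mu * (a x) ^ 2) x :=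
    fun x hx => (hder x hx).congr_of_eventuallyEq
      (by filter_upwards [Iio_mem_nhds hx.2] with t ht using hb_lt t ht)
  have hmem : Ioo r S ∈ 𝓝[<] S := Ioo_mem_nhdsLT hr
  refine ⟨S + min ε δ, b, by simp [hε, hδ], hb_lt, fun t ht ht' => ⟨?_, ?_⟩⟩
  · rw [hb_ge t ht]
    apply hδpos
    rw [Real.dist_eq, abs_of_nonneg (by linarith)]
    linarith [min_le_right ε δ]
  · rcases ht.eq_or_lt with rfl | hlt
    · have hleft : HasDerivWithinAt b (2 * lam * (b S) ^ 3 - 4 * mu * (b S) ^ 2) (Iic S) S := by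
        refine hasDerivWithinAt_Iic_of_tendsto_deriv (s := Ioo r S)
          (fun x hx => (hbder x hx).differentiableAt.differentiableWithinAt) ?_ hmem ?_
        · have h1 : Tendsto b (𝓝[<] S) (𝓝 L) := hlim.congr'
            (by filter_upwards [self_mem_nhdsWithin] with t ht using (hb_lt t ht).symm)
          rw [ContinuousWithinAt, hbS]
          exact h1.mono_left (nhdsWithin_mono _ fun x hx => hx.2)
        · rw [hbS]
          refine Tendsto.congr' (f₁ := fun x => 2 * lam * (a x) ^ 3 - 4 * mu * (a x) ^ 2) ?_ ?_
          · filter_upwards [hmem] with x hx using (hbder x hx).deriv.symm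
          · exact ((hlim.pow 3).const_mul _).sub ((hlim.pow 2).const_mul _)
      have hright : HasDerivWithinAt b (2 * lam * (b S) ^ 3 - 4 * mu * (b S) ^ 2) (Ici S) S := by
        rw [hb_ge S le_rfl]
        exact hβS.hasDerivWithinAt.congr (fun x hx => hb_ge x hx) (hb_ge S le_rfl)
      have := hleft.union hright
      rwa [Iic_union_Ici, hasDerivWithinAt_univ] at this
    · rw [hb_ge t ht]
      refine (hβ t ⟨by linarith, by linarith [min_le_left ε δ]⟩).congr_of_eventuallyEq ?_
      filter_upwards [Ioi_mem_nhds hlt] with x hx using hb_ge x (le_of_lt hx)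

/-- Second-order blow-up expansion of a solution tending to `∞` at `S`. -/
lemma soliton_asymptotics {lam mu : ℝ} (hlam : 0 < lam) {a : ℝ → ℝ} {r S : ℝ} (hr : r < S)
    (hder : ∀ x ∈ Ioo r S, HasDerivAt a (2 * lam * (a x) ^ 3 - 4 * mu * (a x) ^ 2) x)
    (hpos : ∀ x ∈ Ioo r S, 0 < a x) (hlim : Tendsto a (𝓝[<] S) atTop) :
    Tendsto (fun t => a t - 1 / Real.sqrt (4 * lam * (S - t)))
      (𝓝[<] S) (𝓝 (2 * mu / (3 * lam))) := by
  have hmem : Ioo r S ∈ 𝓝[<] S := Ioo_mem_nhdsLT hr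
  set u : ℝ → ℝ := fun t => (a t)⁻¹ with hu
  set w : ℝ → ℝ := fun t => Real.sqrt (4 * lam * (S - t)) with hw
  have hu0 : Tendsto u (𝓝[<] S) (𝓝 0) := hlim.inv_tendsto_atTop
  have hupos : ∀ x ∈ Ioo r S, 0 < u x := fun x hx => inv_pos.2 (hpos x hx)
  have hin : ∀ x ∈ Ioo r S, 0 < 4 * lam * (S - x) := fun x hx => by
    have := sub_pos.2 hx.2
    positivity
  have hwpos : ∀ x ∈ Ioo r S, 0 < w x := fun x hx => Real.sqrt_pos.2 (hin x hx)
  have hw2 : ∀ x ∈ Ioo r S, w x ^ 2 = 4 * lam * (S - x) := fun x hx => Real.sq_sqrt (hin x hx).le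
  have hw0 : Tendsto w (𝓝[<] S) (𝓝 0) := by
    have : ContinuousAt w S := by fun_prop
    have h : w S = 0 := by simp [hw]
    exact h ▸ this.tendsto.mono_left nhdsWithin_le_nhds
  have hud : ∀ x ∈ Ioo r S, HasDerivAt (fun t => u t ^ 2) (8 * mu * u x - 4 * lam) x :=
    fun x hx => by
      have hax := (hpos x hx).ne'
      refine (((hder x hx).fun_inv hax).fun_pow 2).congr_deriv ?_
      simp only [hu, Nat.cast_ofNat, Nat.add_one_sub_one, pow_one]
      field_simp
      ring
  have hlin : ∀ x, HasDerivAt (fun t => 4 * lam * (S - t)) (-(4 * lam)) x := fun x => by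
    simpa using ((hasDerivAt_id x).const_sub S).const_mul (4 * lam)
  have hwd : ∀ x ∈ Ioo r S, HasDerivAt w (-(2 * lam) / w x) x := fun x hx => by
    refine ((hlin x).sqrt (hin x hx).ne').congr_deriv ?_
    have := (hwpos x hx).ne'
    change -(4 * lam) / (2 * w x) = _
    field_simp
    ring
  have hw3d : ∀ x ∈ Ioo r S, HasDerivAt (fun t => w t ^ 3) (-(6 * lam) * w x) x := fun x hx => by
    refine ((hwd x hx).fun_pow 3).congr_deriv ?_
    have := (hwpos x hx).ne'
    simp only [Nat.cast_ofNat, Nat.add_one_sub_one]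
    field_simp
    ring
  have hDd : ∀ x ∈ Ioo r S,
      HasDerivAt (fun t => 4 * lam * (S - t) - u t ^ 2) (-(8 * mu) * u x) x := fun x hx =>
    ((hlin x).fun_sub (hud x hx)).congr_deriv (by ring)
  have hlin0 : Tendsto (fun t => 4 * lam * (S - t)) (𝓝[<] S) (𝓝 0) := by
    have h : ContinuousAt (fun t => 4 * lam * (S - t)) S := by fun_prop
    have h' := h.tendsto.mono_left (nhdsWithin_le_nhds (s := Iio S))
    simpa using h'
  have hu20 : Tendsto (fun t => u t ^ 2) (𝓝[<] S) (𝓝 0) := by simpa using hu0.pow 2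
  have hsq : Tendsto (fun t => u t ^ 2 / (4 * lam * (S - t))) (𝓝[<] S) (𝓝 1) := by
    refine HasDerivAt.lhopital_zero_nhdsLT (f' := fun x => 8 * mu * u x - 4 * lam)
      (g' := fun _ => -(4 * lam)) ?_ (Eventually.of_forall hlin)
      (Eventually.of_forall fun _ => by simp [hlam.ne']) hu20 hlin0 ?_
    · filter_upwards [hmem] with x hx using hud x hx
    · have h := ((hu0.const_mul (8 * mu)).sub_const (4 * lam)).div_const (-(4 * lam))
      convert h using 2
      field_simp
      ring
  have hratio : Tendsto (fun t => u t / w t) (𝓝[<] S) (𝓝 1) := by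
    have h := hsq.sqrt
    rw [Real.sqrt_one] at h
    refine h.congr' ?_
    filter_upwards [hmem] with x hx
    rw [← hw2 x hx, ← div_pow, Real.sqrt_sq (div_pos (hupos x hx) (hwpos x hx)).le]
  have hD : Tendsto (fun t => (4 * lam * (S - t) - u t ^ 2) / w t ^ 3) (𝓝[<] S)
      (𝓝 (4 * mu / (3 * lam))) := by
    refine HasDerivAt.lhopital_zero_nhdsLT (f' := fun x => -(8 * mu) * u x)
      (g' := fun x => -(6 * lam) * w x) ?_ ?_ ?_ ?_ ?_ ?_
    · filter_upwards [hmem] with x hx using hDd x hx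
    · filter_upwards [hmem] with x hx using hw3d x hx
    · filter_upwards [hmem] with x hx
      exact mul_ne_zero (by simpa using hlam.ne') (hwpos x hx).ne'
    · simpa using hlin0.sub hu20
    · simpa using hw0.pow 3
    · have h := hratio.const_mul (4 * mu / (3 * lam))
      rw [mul_one] at h
      refine h.congr' ?_
      filter_upwards [hmem] with x hx
      have := (hwpos x hx).ne'
      field_simp
      ring
  have hfin := hD.div (hratio.mul (hratio.const_add 1)) (by norm_num)
  have hval : 4 * mu / (3 * lam) / (1 * (1 + 1)) = 2 * mu / (3 * lam) := by
    field_simp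
    ring
  rw [hval] at hfin
  refine hfin.congr' ?_
  filter_upwards [hmem] with x hx
  have h1 := hwpos x hx
  have h2 := hupos x hx
  have h3 : a x = 1 / u x := by simp [hu]
  change (4 * lam * (S - x) - u x ^ 2) / w x ^ 3 / (u x / w x * (1 + u x / w x)) = a x - 1 / w x
  rw [h3, ← hw2 x hx]
  have h4 : w x + u x ≠ 0 := by positivity
  field_simp
  ring

/-- For `λ > 0`, `μ ≠ 0`, a maximal positive solution of the soliton ODE
`a' = 2λa³ - 4μa²` (on its maximal interval `(T₀, T₁)`, endpoints in `EReal`)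
with `a(t₀) > max(0, 2μ/λ)` has finite right endpoint `T₁`, blows up as
`t → T₁⁻`, and satisfies the refined asymptotics
`a(t) - 1/√(4λ(T₁ - t)) → 2μ/(3λ)` as `t → T₁⁻`. -/
theorem stmt_9 (lam mu : ℝ) (hlam : 0 < lam) (hmu : mu ≠ 0)
    (T₀ T₁ : EReal) (hlt : T₀ < T₁) (a : ℝ → ℝ)
    (hsol : ∀ t : ℝ, T₀ < (t : EReal) → (t : EReal) < T₁ →
      0 < a t ∧ HasDerivAt a (2 * lam * (a t) ^ 3 - 4 * mu * (a t) ^ 2) t)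
    (hmax : ∀ T₀' T₁' : EReal, T₀' ≤ T₀ → T₁ ≤ T₁' →
      ∀ b : ℝ → ℝ,
        (∀ t : ℝ, T₀' < (t : EReal) → (t : EReal) < T₁' →
          0 < b t ∧ HasDerivAt b (2 * lam * (b t) ^ 3 - 4 * mu * (b t) ^ 2) t) →
        (∀ t : ℝ, T₀ < (t : EReal) → (t : EReal) < T₁ → b t = a t) →
        T₀' = T₀ ∧ T₁' = T₁)
    (t₀ : ℝ) (ht₀ : T₀ < (t₀ : EReal) ∧ (t₀ : EReal) < T₁)
    (ha : max 0 (2 * mu / lam) < a t₀) :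
    ∃ S₁ : ℝ, (S₁ : EReal) = T₁ ∧
      Tendsto a (nhdsWithin S₁ (Set.Iio S₁)) atTop ∧
      Tendsto (fun t => a t - 1 / Real.sqrt (4 * lam * (S₁ - t)))
        (nhdsWithin S₁ (Set.Iio S₁)) (nhds (2 * mu / (3 * lam))) := by
  have hfinite : T₁ ≠ ⊤ := by
    rintro rfl
    obtain ⟨K, hK⟩ := soliton_time_bound hlam ha
    have := hK a t₀ (t₀ + |K|) (by linarith [abs_nonneg K]) rfl fun x hx =>
      (hsol x (ht₀.1.trans_le (EReal.coe_le_coe_iff.2 hx.1)) (EReal.coe_lt_top x)).2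
    linarith [le_abs_self K]
  lift T₁ to ℝ using ⟨hfinite, (bot_le.trans_lt hlt).ne'⟩ with S
  have hS : t₀ < S := EReal.coe_lt_coe_iff.1 ht₀.2
  have hsol' : ∀ t ∈ Ico t₀ S,
      0 < a t ∧ HasDerivAt a (2 * lam * (a t) ^ 3 - 4 * mu * (a t) ^ 2) t := fun t ht =>
    hsol t (ht₀.1.trans_le (EReal.coe_le_coe_iff.2 ht.1)) (EReal.coe_lt_coe_iff.2 ht.2)
  have hge : ∀ t ∈ Ico t₀ S, a t₀ ≤ a t := fun t ht =>
    soliton_ge_initial hlam ht.1 (fun x hx => (hsol' x ⟨hx.1, hx.2.trans_lt ht.2⟩).2) ha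
  have hmono : Monotone fun x : Ioo t₀ S => a x := fun x y hxy =>
    soliton_ge_initial hlam hxy
      (fun z hz => (hsol' z ⟨x.2.1.le.trans hz.1, hz.2.trans_lt y.2.2⟩).2)
      (ha.trans_le (hge x ⟨x.2.1.le, x.2.2⟩))
  have hder : ∀ x ∈ Ioo t₀ S, HasDerivAt a (2 * lam * (a x) ^ 3 - 4 * mu * (a x) ^ 2) x :=
    fun x hx => (hsol' x (Ioo_subset_Ico_self hx)).2
  have hblow : Tendsto a (𝓝[<] S) atTop := by
    rcases tendsto_atTop_of_monotone hmono with h | ⟨L, h⟩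
    · exact (tendsto_comp_coe_Ioo_atTop hS).1 h
    · have hlim : Tendsto a (𝓝[<] S) (𝓝 L) := (tendsto_comp_coe_Ioo_atTop hS).1 h
      have hL : a t₀ ≤ L := ge_of_tendsto hlim (by
        filter_upwards [Ioo_mem_nhdsLT hS] with x hx using hge x (Ioo_subset_Ico_self hx))
      obtain ⟨S', b, hSS', hba, hb⟩ := soliton_extend hS hder
        (((le_max_left _ _).trans_lt ha).trans_le hL) hlim
      have hcontra := (hmax T₀ S' le_rfl (EReal.coe_le_coe_iff.2 hSS'.le) b (fun t h0 h1 => by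
        rcases lt_or_ge t S with hlt' | hge'
        · obtain ⟨hp, hd⟩ := hsol t h0 (EReal.coe_lt_coe_iff.2 hlt')
          rw [hba t hlt']
          refine ⟨hp, hd.congr_of_eventuallyEq ?_⟩
          filter_upwards [Iio_mem_nhds hlt'] with x hx using hba x hx
        · exact hb t hge' (EReal.coe_lt_coe_iff.1 h1))
        (fun t _ h1 => hba t (EReal.coe_lt_coe_iff.1 h1))).2
      exact absurd (EReal.coe_eq_coe_iff.1 hcontra) hSS'.ne'
  exact ⟨S, rfl, hblow, soliton_asymptotics hlam hS hder
    (fun x hx => (hsol' x (Ioo_subset_Ico_self hx)).1) hblow⟩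
end

section
/- Let λ < 0, μ ∈ ℝ, T₀ ∈ ℝ, ε > 0, and let a be a positive solution of the soliton ODE a′ = 2λa³ − 4μa² on (T₀, T₀ + ε) with a(t) → ∞ as t → T₀⁺. Then lim_{t→T₀⁺} √(−4λ(t − T₀)) · a(t) = 1; that is, a(t) = 1/√(−4λ(t − T₀)) + o(1/√(t − T₀)) as t → T₀⁺. -/
open Set Filter

/-!
The substitution `u = a⁻²` turns the soliton ODE into `u' = -4λ + 8μ / a`. Since `a → ∞` at
`T₀⁺`, `u → 0` and `u' → -4λ` there, so L'Hôpital's rule gives `u(t) / (t - T₀) → -4λ ≠ 0`.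
Taking `-4λ` over this quotient and then the square root yields `√(-4λ(t - T₀)) · a(t) → 1`.
-/

/-- For `λ < 0`, a positive solution of the soliton ODE `a' = 2λa³ - 4μa²` on
`(T₀, T₀ + ε)` blowing up as `t → T₀⁺` satisfies
`√(-4λ(t - T₀))·a(t) → 1` as `t → T₀⁺`. -/
theorem stmt_10 (lam mu T₀ ε : ℝ) (hlam : lam < 0) (hε : 0 < ε) (a : ℝ → ℝ)
    (hsol : ∀ t ∈ Set.Ioo T₀ (T₀ + ε),
      0 < a t ∧ HasDerivAt a (2 * lam * (a t) ^ 3 - 4 * mu * (a t) ^ 2) t)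
    (hblow : Tendsto a (nhdsWithin T₀ (Set.Ioi T₀)) atTop) :
    Tendsto (fun t => Real.sqrt (-4 * lam * (t - T₀)) * a t)
      (nhdsWithin T₀ (Set.Ioi T₀)) (nhds 1) := by
  have hmem : ∀ᶠ t in nhdsWithin T₀ (Ioi T₀), t ∈ Ioo T₀ (T₀ + ε) :=
    Ioo_mem_nhdsGT (by linarith)
  have hinv : Tendsto (fun t => (a t)⁻¹) (nhdsWithin T₀ (Ioi T₀)) (nhds 0) :=
    tendsto_inv_atTop_zero.comp hblow
  have hu0 : Tendsto (fun t => ((a t)⁻¹) ^ 2) (nhdsWithin T₀ (Ioi T₀)) (nhds 0) := by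
    simpa using hinv.pow 2
  have hu' : ∀ᶠ t in nhdsWithin T₀ (Ioi T₀),
      HasDerivAt (fun t => ((a t)⁻¹) ^ 2) (-4 * lam + 8 * mu * (a t)⁻¹) t := by
    filter_upwards [hmem] with t ht
    obtain ⟨hpos, hd⟩ := hsol t ht
    have hne := hpos.ne'
    refine ((hd.fun_inv hne).fun_pow 2).congr_deriv ?_
    norm_num
    field_simp
    ring
  have hg0 : Tendsto (fun t => t - T₀) (nhdsWithin T₀ (Ioi T₀)) (nhds 0) := by
    have h : Tendsto (fun t => t - T₀) (nhds T₀) (nhds (T₀ - T₀)) :=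
      tendsto_id.sub_const T₀
    rw [sub_self] at h
    exact h.mono_left nhdsWithin_le_nhds
  have hlim : Tendsto (fun t => ((a t)⁻¹) ^ 2 / (t - T₀)) (nhdsWithin T₀ (Ioi T₀))
      (nhds (-4 * lam)) := by
    refine HasDerivAt.lhopital_zero_nhdsGT (g' := fun _ => 1) hu'
      (Eventually.of_forall fun t => (hasDerivAt_id t).sub_const T₀)
      (Eventually.of_forall fun _ => one_ne_zero) hu0 hg0 ?_
    simpa using (hinv.const_mul (8 * mu)).const_add (-4 * lam)
  have hne : -4 * lam ≠ 0 := by linarith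
  have hquot := ((tendsto_const_nhds (x := -4 * lam)).div hlim hne).sqrt
  rw [div_self hne, Real.sqrt_one] at hquot
  refine hquot.congr' ?_
  filter_upwards [hmem] with t ht
  have hpos := (hsol t ht).1
  have ht0 : 0 < t - T₀ := sub_pos.2 ht.1
  have hrw : -4 * lam / (((a t)⁻¹) ^ 2 / (t - T₀)) = -4 * lam * (t - T₀) * a t ^ 2 := by
    field_simp
  simp only [Pi.div_apply]
  rw [hrw, Real.sqrt_mul (mul_nonneg (by linarith) ht0.le), Real.sqrt_sq hpos.le]
end

section
/- Let λ, μ ∈ ℝ with μ ≠ 0, let c ≥ 0, and let a be a positive solution of the soliton ODE a′ = 2λa³ − 4μa² on (c, ∞) with a(t) → 0 as t → ∞. Then for every T > max(c, 0), the integral ∫_T^∞ a(t)/t dt is finite. -/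
open Set Filter MeasureTheory

/-!
The substitution `g = -μ a` treats both signs of `μ` at once: the ODE gives
`g' = a² (4μ² - 2λμ a)`, and since `a → 0` eventually `g' ≥ 2μ² a² ≥ 0`. As `g` has a finite
limit at infinity, its nonnegative derivative is integrable near infinity, hence so is `a²`.
Finally `a / t ≤ a² + 1 / t²`, and both terms on the right are integrable near infinity; on the
remaining compact interval `a / t` is continuous.
-/

/-- A positive solution of the soliton ODE `a' = 2λa³ - 4μa²` on `(c, ∞)`
tending to `0` at infinity has `∫_T^∞ a(t)/t dt < ∞` for every `T > max(c,0)`. -/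
theorem stmt_14 (lam mu : ℝ) (hmu : mu ≠ 0) (c : ℝ) (hc : 0 ≤ c) (a : ℝ → ℝ)
    (hsol : ∀ t ∈ Set.Ioi c,
      0 < a t ∧ HasDerivAt a (2 * lam * (a t) ^ 3 - 4 * mu * (a t) ^ 2) t)
    (hlim : Tendsto a atTop (nhds 0)) :
    ∀ T : ℝ, max c 0 < T →
      IntegrableOn (fun t => a t / t) (Set.Ioi T) volume := by
  intro T hT
  have hcT : c < T := (le_max_left _ _).trans_lt hT
  have hT0 : 0 < T := (le_max_right _ _).trans_lt hT
  have hmu2 : 0 < mu ^ 2 := by positivity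
  have hcont : ContinuousOn (fun t => a t / t) (Ici T) := by
    intro t ht
    have ht' : T ≤ t := ht
    exact ((hsol t (hcT.trans_le ht')).2.continuousAt.div continuousAt_id
      (hT0.trans_le ht').ne').continuousWithinAt
  have hev : ∀ᶠ t in atTop, 2 * lam * mu * a t < 2 * mu ^ 2 := by
    have h : Tendsto (fun t => 2 * lam * mu * a t) atTop (nhds (2 * lam * mu * 0)) :=
      hlim.const_mul _
    exact h.eventually_lt_const (by linarith)
  obtain ⟨N₀, hN₀⟩ := eventually_atTop.1 hev
  obtain ⟨N, hN₀N, hTN⟩ : ∃ N, N₀ ≤ N ∧ T ≤ N := ⟨max N₀ T, le_max_left _ _, le_max_right _ _⟩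
  have hcN : c < N := hcT.trans_le hTN
  have hN0 : 0 < N := hT0.trans_le hTN
  have hbound : ∀ t ∈ Ioi N,
      2 * mu ^ 2 * a t ^ 2 ≤ -mu * (2 * lam * a t ^ 3 - 4 * mu * a t ^ 2) := by
    intro t ht
    have h := hN₀ t (hN₀N.trans (le_of_lt ht))
    nlinarith [mul_nonneg (sq_nonneg (a t)) (sub_nonneg.2 h.le)]
  have hderiv : IntegrableOn
      (fun t => -mu * (2 * lam * a t ^ 3 - 4 * mu * a t ^ 2)) (Ioi N) volume :=
    integrableOn_Ioi_deriv_of_nonneg (g := fun t => -mu * a t)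
      ((hsol N hcN).2.continuousAt.const_mul (-mu)).continuousWithinAt
      (fun t ht => (hsol t (hcN.trans ht)).2.const_mul (-mu))
      (fun t ht => le_trans (by positivity) (hbound t ht))
      (hlim.const_mul (-mu))
  have hpow : IntegrableOn (fun t : ℝ => t ^ (-2 : ℝ)) (Ioi N) volume :=
    integrableOn_Ioi_rpow_of_lt (by norm_num) hN0
  have htail : IntegrableOn (fun t => a t / t) (Ioi N) volume := by
    refine Integrable.mono' ((hderiv.const_mul (1 / (2 * mu ^ 2))).add hpow)
      ((hcont.mono fun t ht => hTN.trans (le_of_lt ht)).aestronglyMeasurable measurableSet_Ioi)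
      ((ae_restrict_iff' measurableSet_Ioi).2 (Eventually.of_forall fun t ht => ?_))
    have ht0 : 0 < t := hN0.trans ht
    have ha : 0 < a t := (hsol t (hcN.trans ht)).1
    have hsq : a t ^ 2 ≤
        1 / (2 * mu ^ 2) * (-mu * (2 * lam * a t ^ 3 - 4 * mu * a t ^ 2)) := by
      rw [one_div_mul_eq_div, le_div_iff₀ (by positivity)]
      linarith [hbound t ht]
    have hrpow : t ^ (-2 : ℝ) = t⁻¹ ^ 2 := by
      rw [Real.rpow_neg ht0.le, inv_pow]
      norm_cast
    rw [Real.norm_of_nonneg (by positivity), Pi.add_apply, hrpow, div_eq_mul_inv]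
    nlinarith [sq_nonneg (a t - t⁻¹), sq_nonneg (a t), sq_nonneg t⁻¹]
  rw [← Ioc_union_Ioi_eq_Ioi hTN]
  exact (((hcont.mono Icc_subset_Ici_self).integrableOn_Icc).mono_set Ioc_subset_Icc_self).union
    htail
end

section
/- Let λ < 0, μ ∈ ℝ, ε > 0, and let a be a positive solution of the soliton ODE a′ = 2λa³ − 4μa² on (0, ε) with a(t) → ∞ as t → 0⁺. Then ∫_0^ε a(t)/t dt = ∞. -/
/-!
Since `a(t) → ∞` as `t → 0⁺`, there is `δ ∈ (0, ε]` with `a ≥ 1` on `(0, δ)`. There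
`a(t)/t ≥ 1/t`, and `1/t` is not integrable at `0`, so the integral diverges by comparison.
-/

open Set Filter MeasureTheory

theorem lintegral_inv_Ioo_zero {δ : ℝ} (hδ : 0 < δ) :
    ∫⁻ t in Set.Ioo (0 : ℝ) δ, ENNReal.ofReal t⁻¹ = ⊤ := by
  by_contra h
  have hint : IntegrableOn (fun t : ℝ => t⁻¹) (Set.Ioo 0 δ) := by
    refine ⟨measurable_inv.aestronglyMeasurable, ?_⟩
    rw [hasFiniteIntegral_iff_ofReal]
    · exact lt_top_iff_ne_top.2 h
    · filter_upwards [ae_restrict_mem measurableSet_Ioo] with t ht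
      exact (inv_pos.2 ht.1).le
  have hii : IntervalIntegrable (fun t : ℝ => t⁻¹) volume 0 δ :=
    (intervalIntegrable_iff_integrableOn_Ioo_of_le hδ.le).2 hint
  rw [intervalIntegrable_inv_iff] at hii
  rcases hii with h0 | h0
  · exact hδ.ne h0
  · exact h0 left_mem_uIcc


/-- For `λ < 0`, a positive solution of the soliton ODE `a' = 2λa³ - 4μa²` on
`(0, ε)` blowing up as `t → 0⁺` has `∫_0^ε a(t)/t dt = ∞`. -/
theorem stmt_15 (lam mu ε : ℝ) (hlam : lam < 0) (hε : 0 < ε) (a : ℝ → ℝ)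
    (hsol : ∀ t ∈ Set.Ioo (0 : ℝ) ε,
      0 < a t ∧ HasDerivAt a (2 * lam * (a t) ^ 3 - 4 * mu * (a t) ^ 2) t)
    (hblow : Tendsto a (nhdsWithin 0 (Set.Ioi 0)) atTop) :
    ∫⁻ t in Set.Ioo (0 : ℝ) ε, ENNReal.ofReal (a t / t) = ⊤ := by
  obtain ⟨δ, ⟨hδ, hδε⟩, hsub⟩ :=
    (mem_nhdsGT_iff_exists_mem_Ioc_Ioo_subset hε).1 (hblow.eventually_ge_atTop 1)
  rw [eq_top_iff, ← lintegral_inv_Ioo_zero hδ]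
  calc ∫⁻ t in Set.Ioo (0 : ℝ) δ, ENNReal.ofReal t⁻¹
      ≤ ∫⁻ t in Set.Ioo (0 : ℝ) δ, ENNReal.ofReal (a t / t) := by
        refine setLIntegral_mono' measurableSet_Ioo fun t ht => ENNReal.ofReal_le_ofReal ?_
        have h1 : 1 ≤ a t := hsub ht
        rw [inv_eq_one_div]
        exact div_le_div_of_nonneg_right h1 ht.1.le
    _ ≤ ∫⁻ t in Set.Ioo (0 : ℝ) ε, ENNReal.ofReal (a t / t) :=
        lintegral_mono_set (Set.Ioo_subset_Ioo_right hδε)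
end

section
/- Let λ < 0, μ ∈ ℝ, T₀ > 0, ε > 0, and let a be a positive solution of the soliton ODE a′ = 2λa³ − 4μa² on (T₀, T₀ + ε) with a(t) → ∞ as t → T₀⁺. Then for every ε′ with 0 < ε′ < ε, the integral ∫_{T₀}^{T₀+ε′} a(t)/t dt is finite. -/
open Set Filter MeasureTheory

/-!
Dividing the ODE by `-a²` gives `(1/a)' = -2λ a + 4μ`, so `a` is the derivative of
`G = (1/a - 4μ t) / (-2λ)` on the whole interval. Since `a → ∞` at `T₀⁺`, the function `1/a`
extends continuously by `0` to `T₀`, hence so does `G`. A nonnegative derivative of a function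
continuous up to the endpoints is integrable, so `a` is integrable near `T₀`; the factor `1/t` is
continuous on `[T₀, T₀ + ε']` because `T₀ > 0`.
-/

/-- For `λ < 0` and `T₀ > 0`, a positive solution of the soliton ODE
`a' = 2λa³ - 4μa²` on `(T₀, T₀ + ε)` blowing up as `t → T₀⁺` has
`∫_{T₀}^{T₀+ε'} a(t)/t dt < ∞` for every `0 < ε' < ε`. -/
theorem stmt_16 (lam mu T₀ ε : ℝ) (hlam : lam < 0) (hT₀ : 0 < T₀) (hε : 0 < ε)
    (a : ℝ → ℝ)
    (hsol : ∀ t ∈ Set.Ioo T₀ (T₀ + ε),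
      0 < a t ∧ HasDerivAt a (2 * lam * (a t) ^ 3 - 4 * mu * (a t) ^ 2) t)
    (hblow : Tendsto a (nhdsWithin T₀ (Set.Ioi T₀)) atTop) :
    ∀ ε' : ℝ, 0 < ε' → ε' < ε →
      IntegrableOn (fun t => a t / t) (Set.Ioo T₀ (T₀ + ε')) volume := by
  intro ε' hε' hlt
  -- `F` is `1/a` with its limit value `0` at `T₀`; the value of `a` at `T₀` itself is arbitrary.
  set F : ℝ → ℝ := Function.update (fun t => (a t)⁻¹) T₀ 0 with hF
  have hFd : ∀ t ∈ Ioo T₀ (T₀ + ε), HasDerivAt F (-2 * lam * a t + 4 * mu) t := by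
    intro t ht
    obtain ⟨hpos, hd⟩ := hsol t ht
    have h1 : HasDerivAt (fun t => (a t)⁻¹) (-2 * lam * a t + 4 * mu) t := by
      refine (hd.fun_inv hpos.ne').congr_deriv ?_
      field_simp
      ring
    refine h1.congr_of_eventuallyEq ?_
    filter_upwards [isOpen_ne.mem_nhds ht.1.ne'] with s hs
    exact Function.update_of_ne hs _ _
  have hFc : ContinuousOn F (Icc T₀ (T₀ + ε')) := by
    intro t ht
    rcases ht.1.eq_or_lt with rfl | h
    · rw [hF, continuousWithinAt_update_same]
      refine hblow.inv_tendsto_atTop.mono_left (nhdsWithin_mono _ ?_)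
      rintro s ⟨hs, hne⟩
      exact lt_of_le_of_ne hs.1 (Ne.symm hne)
    · exact (hFd t ⟨h, by linarith [ht.2]⟩).continuousAt.continuousWithinAt
  have hint : IntegrableOn a (Ioc T₀ (T₀ + ε')) := by
    refine intervalIntegral.integrableOn_deriv_of_nonneg
      (g := fun t => (F t - 4 * mu * t) / (-2 * lam)) ?_ ?_ ?_
    · exact (hFc.sub (by fun_prop)).div_const _
    · intro t ht
      have h := ((hFd t ⟨ht.1, by linarith [ht.2]⟩).sub
        ((hasDerivAt_id t).const_mul (4 * mu))).div_const (-2 * lam)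
      refine h.congr_deriv ?_
      have hne : lam ≠ 0 := hlam.ne
      field_simp
      ring
    · intro t ht
      exact (hsol t ⟨ht.1, by linarith [ht.2]⟩).1.le
  have hIcc := (integrableOn_Icc_iff_integrableOn_Ioc (μ := volume)).2 hint
  have hinv : ContinuousOn (fun t : ℝ => t⁻¹) (Icc T₀ (T₀ + ε')) :=
    continuousOn_id.inv₀ fun t ht => (hT₀.trans_le ht.1).ne'
  exact (hIcc.mul_continuousOn hinv isCompact_Icc).mono_set Ioo_subset_Icc_self
end

section
/- Let λ, μ ∈ ℝ with μ ≠ 0, let a be a positive solution of the soliton ODE a′ = 2λa³ − 4μa² on (T, ∞) with a(t) → a_∞ > 0 as t → ∞, and let b : (R₀, ∞) → ℝ be differentiable with b(r)²/4 > T, b′(r) = 1/a(b(r)²/4) for all r > R₀, and b(r) → ∞ as r → ∞. Then the function r ↦ b(r) − r/a_∞ is bounded on (R₀, ∞); i.e. b(r) = a_∞^{−1}·r + O(1) as r → ∞. -/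
open Set Filter

/-!
Since `a` and `a'` both converge, `a' → 0`, so `a_∞` is an equilibrium: `λ a_∞ = 2μ`, and in
particular `λ ≠ 0`. Put `w(r) = 1 / a(b(r)²/4)`, so that `b' = w`, and the soliton ODE becomes
`w' = λ a_∞ b (w - 1/a_∞)`. With `c = 1/(λ a_∞)` the function `F = b - r/a_∞ - c w/b` then satisfies
`F' = c w²/b² = c w b'/b²`. As `0 < w ≤ K` for large `r`, `|F'|` is at most the derivative of
`-|c| K / b`, hence `F`, and with it `b - r/a_∞`, is bounded for large `r`. This needs neither the
sign of `λ` nor that of `a - a_∞`.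

On the remaining interval `(R₀, r₁]` the increasing function `b` is bounded above by `b(r₁)`; it
cannot tend to `-∞` at `R₀` because `b' ≤ K` wherever `b` is very negative.
-/

theorem le_of_hasDerivAt_nonneg {f f' : ℝ → ℝ} {p q : ℝ} (hpq : p ≤ q)
    (hf : ∀ x ∈ Icc p q, HasDerivAt f (f' x) x) (h0 : ∀ x ∈ Icc p q, 0 ≤ f' x) : f p ≤ f q := by
  have hm : MonotoneOn f (Icc p q) := by
    apply monotoneOn_of_deriv_nonneg (convex_Icc p q)
    · exact fun x hx => (hf x hx).continuousAt.continuousWithinAt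
    · exact fun x hx => (hf x (interior_subset hx)).differentiableAt.differentiableWithinAt
    · intro x hx
      rw [(hf x (interior_subset hx)).deriv]
      exact h0 x (interior_subset hx)
  exact hm (left_mem_Icc.2 hpq) (right_mem_Icc.2 hpq) hpq

/-- A limit at infinity of a solution of an autonomous ODE is an equilibrium. -/
theorem equilibrium_of_tendsto {a g : ℝ → ℝ} {T l : ℝ} (hg : Continuous g)
    (ha : ∀ t, T < t → HasDerivAt a (g (a t)) t) (hlim : Tendsto a atTop (nhds l)) : g l = 0 := by
  have hmv : ∀ t : ℝ, ∃ s, t < s ∧ (T < t → a (t + 1) - a t = g (a s)) := by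
    intro t
    by_cases ht : T < t
    · obtain ⟨s, hs, h⟩ := exists_hasDerivAt_eq_slope a (fun s => g (a s)) (lt_add_one t)
        (fun x hx => (ha x (ht.trans_le hx.1)).continuousAt.continuousWithinAt)
        (fun x hx => ha x (ht.trans hx.1))
      refine ⟨s, hs.1, fun _ => ?_⟩
      rw [h]
      simp
    · exact ⟨t + 1, lt_add_one t, fun h => absurd h ht⟩
  choose s hs hslope using hmv
  have hs_top : Tendsto s atTop atTop := tendsto_atTop_mono (fun t => (hs t).le) tendsto_id
  have h1 : Tendsto (fun t => g (a (s t))) atTop (nhds (g l)) :=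
    (hg.tendsto l).comp (hlim.comp hs_top)
  have h2 : Tendsto (fun t => a (t + 1) - a t) atTop (nhds (l - l)) :=
    (hlim.comp (tendsto_atTop_add_const_right _ 1 tendsto_id)).sub hlim
  rw [sub_self] at h2
  refine tendsto_nhds_unique h1 (h2.congr' ?_)
  filter_upwards [eventually_gt_atTop T] with t ht using hslope t ht

/-- If `a` is a positive solution of the soliton ODE `a' = 2λa³ - 4μa²` on
`(T, ∞)` with `a(t) → a_∞ > 0` as `t → ∞`, and `b` solves `b' = 1/a(b²/4)` on
`(R₀, ∞)` with `b(r) → ∞`, then `b(r) = a_∞⁻¹·r + O(1)` as `r → ∞`. -/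
theorem stmt_17 (lam mu : ℝ) (hmu : mu ≠ 0) (T : ℝ) (a : ℝ → ℝ) (aInf : ℝ)
    (haInf : 0 < aInf)
    (hsol : ∀ t ∈ Set.Ioi T,
      0 < a t ∧ HasDerivAt a (2 * lam * (a t) ^ 3 - 4 * mu * (a t) ^ 2) t)
    (hlim : Tendsto a atTop (nhds aInf))
    (R₀ : ℝ) (b : ℝ → ℝ)
    (hb : ∀ r ∈ Set.Ioi R₀,
      T < (b r) ^ 2 / 4 ∧ HasDerivAt b (1 / a ((b r) ^ 2 / 4)) r)
    (hbInf : Tendsto b atTop atTop) :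
    ∃ C : ℝ, ∀ r ∈ Set.Ioi R₀, |b r - r / aInf| ≤ C := by
  have heq : 2 * lam * aInf ^ 3 - 4 * mu * aInf ^ 2 = 0 :=
    equilibrium_of_tendsto (g := fun x => 2 * lam * x ^ 3 - 4 * mu * x ^ 2) (by fun_prop)
      (fun t ht => (hsol t ht).2) hlim
  have hmu2 : lam * aInf = 2 * mu := by
    have h : aInf ^ 2 * (lam * aInf - 2 * mu) = 0 := by linear_combination heq / 2
    rcases mul_eq_zero.1 h with h | h
    · exact absurd h (by positivity)
    · linarith
  have hlam : lam ≠ 0 := by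
    rintro rfl
    apply hmu
    linarith
  set w : ℝ → ℝ := fun r => 1 / a ((b r) ^ 2 / 4) with hw
  have hwpos : ∀ r, R₀ < r → 0 < w r := fun r hr =>
    one_div_pos.2 (hsol _ (hb r hr).1).1
  have hbd : ∀ r, R₀ < r → HasDerivAt b (w r) r := fun r hr => (hb r hr).2
  have hwd : ∀ r, R₀ < r → HasDerivAt w (lam * aInf * b r * (w r - 1 / aInf)) r := by
    intro r hr
    obtain ⟨hpos, hder⟩ := hsol _ (hb r hr).1
    have h1 : HasDerivAt (fun r => (b r) ^ 2 / 4) (b r * w r / 2) r := by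
      refine (((hbd r hr).pow 2).div_const 4).congr_deriv ?_
      simp only [Nat.cast_ofNat, Nat.add_one_sub_one, pow_one]
      ring
    have h2 := HasDerivAt.comp r hder h1
    have h3 := h2.inv hpos.ne'
    have h4 : w = (a ∘ fun r => (b r) ^ 2 / 4)⁻¹ := by
      ext x
      simp [hw]
    rw [h4]
    refine h3.congr_deriv ?_
    rw [← h4]
    have h5 : w r = 1 / a ((b r) ^ 2 / 4) := rfl
    rw [h5]
    simp only [Function.comp]
    field_simp
    linear_combination (-2 * b r) * hmu2
  have hbmono : ∀ p q, R₀ < p → p ≤ q → b p ≤ b q := fun p q hp hpq =>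
    le_of_hasDerivAt_nonneg hpq (fun x hx => hbd x (hp.trans_le hx.1))
      (fun x hx => (hwpos x (hp.trans_le hx.1)).le)
  obtain ⟨K, hK⟩ : ∃ K, K = 2 / aInf := ⟨_, rfl⟩
  have hK0 : 0 < K := by rw [hK]; positivity
  -- Beyond `|b| = M`, the argument `b²/4` is so large that `a ≥ a_∞/2`, i.e. `w ≤ K`.
  obtain ⟨M, hM1, hM⟩ : ∃ M : ℝ, 1 ≤ M ∧ ∀ r, M ≤ |b r| → w r ≤ K := by
    obtain ⟨N, hN⟩ := eventually_atTop.1 (hlim.eventually (lt_mem_nhds (half_lt_self haInf)))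
    refine ⟨max 1 (4 * N), le_max_left _ _, fun r hr => ?_⟩
    have h1 : 1 ≤ |b r| := (le_max_left _ _).trans hr
    have h2 : 4 * N ≤ |b r| := (le_max_right _ _).trans hr
    have h3 : N ≤ (b r) ^ 2 / 4 := by
      rw [← sq_abs]
      nlinarith
    have h4 := hN _ h3
    have h5 : K = 1 / (aInf / 2) := by rw [hK]; field_simp
    rw [h5]
    exact one_div_le_one_div_of_le (by positivity) h4.le
  obtain ⟨r₁, hr₁, hbr₁⟩ : ∃ r₁, R₀ < r₁ ∧ ∀ r, r₁ ≤ r → M ≤ b r := by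
    obtain ⟨r₂, h⟩ := eventually_atTop.1
      ((hbInf.eventually_ge_atTop M).and (eventually_gt_atTop R₀))
    exact ⟨r₂, (h r₂ le_rfl).2, fun r hr => (h r hr).1⟩
  obtain ⟨c, hc⟩ : ∃ c, c = 1 / (lam * aInf) := ⟨_, rfl⟩
  obtain ⟨F, hF⟩ : ∃ F : ℝ → ℝ, F = fun r => b r - r / aInf - c * (w r / b r) := ⟨_, rfl⟩
  have hbpos : ∀ r, r₁ ≤ r → 1 ≤ b r := fun r hr => hM1.trans (hbr₁ r hr)
  have hwK : ∀ r, r₁ ≤ r → w r ≤ K := fun r hr =>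
    hM r ((hbr₁ r hr).trans (le_abs_self _))
  have hFd : ∀ r, r₁ ≤ r → HasDerivAt F (c * w r ^ 2 / b r ^ 2) r := by
    intro r hr
    have hb0 : b r ≠ 0 := (zero_lt_one.trans_le (hbpos r hr)).ne'
    have hR := hr₁.trans_le hr
    rw [hF]
    refine (((hbd r hR).sub ((hasDerivAt_id r).div_const aInf)).sub
      (((hwd r hR).div (hbd r hR) hb0).const_mul c)).congr_deriv ?_
    rw [hc]
    field_simp
    ring
  have hinvd : ∀ r, r₁ ≤ r → HasDerivAt (fun r => |c| * K * (b r)⁻¹)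
      (|c| * K * (-w r / b r ^ 2)) r := fun r hr =>
    ((hbd r (hr₁.trans_le hr)).inv (zero_lt_one.trans_le (hbpos r hr)).ne').const_mul _
  have hcmp : ∀ r, r₁ ≤ r → |c * w r ^ 2 / b r ^ 2| ≤ |c| * K * (w r / b r ^ 2) := by
    intro r hr
    have hw0 := hwpos r (hr₁.trans_le hr)
    have hb0 := zero_lt_one.trans_le (hbpos r hr)
    rw [abs_div, abs_mul, abs_of_pos (pow_pos hw0 2), abs_of_pos (pow_pos hb0 2), ← mul_div_assoc]
    apply div_le_div_of_nonneg_right _ (pow_pos hb0 2).le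
    rw [mul_assoc]
    apply mul_le_mul_of_nonneg_left _ (abs_nonneg c)
    nlinarith [hwK r hr]
  have hinv : ∀ r, r₁ ≤ r → 0 ≤ |c| * K * (b r)⁻¹ ∧ |c| * K * (b r)⁻¹ ≤ |c| * K := by
    intro r hr
    have hb0 := zero_lt_one.trans_le (hbpos r hr)
    have hcK : 0 ≤ |c| * K := by positivity
    exact ⟨by positivity, mul_le_of_le_one_right hcK (inv_le_one_of_one_le₀ (hbpos r hr))⟩
  have hFbound : ∀ r, r₁ ≤ r → |F r - F r₁| ≤ |c| * K := by
    intro r hr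
    have h1 := le_of_hasDerivAt_nonneg hr
      (fun x hx => (hFd x hx.1).sub (hinvd x hx.1)) (fun x hx => by
        have := neg_abs_le (c * w x ^ 2 / b x ^ 2)
        have := hcmp x hx.1
        rw [neg_div]
        linarith)
    have h2 := le_of_hasDerivAt_nonneg hr
      (fun x hx => ((hFd x hx.1).add (hinvd x hx.1)).neg) (fun x hx => by
        have := le_abs_self (c * w x ^ 2 / b x ^ 2)
        have := hcmp x hx.1
        rw [neg_div]
        linarith)
    simp only [Pi.sub_apply, Pi.add_apply, Pi.neg_apply] at h1 h2
    have := hinv r hr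
    have := hinv r₁ le_rfl
    rw [abs_le]
    constructor <;> linarith
  have hfar : ∀ r, r₁ ≤ r → |b r - r / aInf| ≤ |F r₁| + 2 * (|c| * K) := by
    intro r hr
    have hw0 := hwpos r (hr₁.trans_le hr)
    have hb0 := zero_lt_one.trans_le (hbpos r hr)
    have h1 : |c * (w r / b r)| ≤ |c| * K := by
      rw [abs_mul, abs_of_pos (div_pos hw0 hb0)]
      apply mul_le_mul_of_nonneg_left _ (abs_nonneg c)
      exact (div_le_self hw0.le (hbpos r hr)).trans (hwK r hr)
    have h2 : b r - r / aInf = F r₁ + (F r - F r₁) + c * (w r / b r) := by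
      rw [hF]
      ring
    rw [h2]
    have := abs_add_three (F r₁) (F r - F r₁) (c * (w r / b r))
    have := hFbound r hr
    linarith
  have hnear : ∀ r, R₀ < r → r ≤ r₁ → -M - K * (r₁ - R₀) ≤ b r := by
    intro r hr hrr
    by_cases hlow : -M ≤ b r
    · nlinarith
    push Not at hlow
    obtain ⟨s, hs, hbs⟩ : -M ∈ b '' Icc r r₁ := by
      apply intermediate_value_Icc hrr
      · exact fun x hx => (hbd x (hr.trans_le hx.1)).continuousAt.continuousWithinAt
      · exact ⟨hlow.le, by linarith [hbr₁ r₁ le_rfl]⟩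
    have h1 := le_of_hasDerivAt_nonneg hs.1
      (fun x hx => ((hasDerivAt_id x).const_mul K).sub (hbd x (hr.trans_le hx.1)))
      (fun x hx => by
        have h2 : b x ≤ -M := hbs ▸ hbmono x s (hr.trans_le hx.1) hx.2
        have h3 := hM x (by linarith [neg_le_abs (b x)])
        linarith)
    simp only [Pi.sub_apply, id] at h1
    nlinarith [hs.2]
  have hdiv : ∀ r, R₀ < r → r ≤ r₁ → R₀ / aInf ≤ r / aInf ∧ r / aInf ≤ r₁ / aInf :=
    fun r hr hrr => ⟨div_le_div_of_nonneg_right hr.le haInf.le,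
      div_le_div_of_nonneg_right hrr haInf.le⟩
  refine ⟨max (|F r₁| + 2 * (|c| * K))
    (max (b r₁ - R₀ / aInf) (M + K * (r₁ - R₀) + r₁ / aInf)), fun r hr => ?_⟩
  rcases le_total r₁ r with h | h
  · exact (hfar r h).trans (le_max_left _ _)
  · refine le_trans ?_ (le_max_right _ _)
    have h1 := hdiv r hr h
    have h2 := hnear r hr h
    have h3 := hbmono r r₁ hr h
    rw [abs_le']
    constructor
    · exact le_trans (by linarith) (le_max_left _ _)
    · exact le_trans (by linarith) (le_max_right _ _)
end
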